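/- Let s ∈ B_3^3 be an irreducible braid system of degree 3 and length 3 whose Hurwitz orbit s·B_3 is finite. Then #(s·B_3) ≤ 162. -/

import Mathlib

open FreeGroup in
/-- The braid relations on `m` strands (generators indexed 0-based by `Fin (m-1)`). -/
def braidRels (m : ℕ) : Set (FreeGroup (Fin (m - 1))) :=
  {r | ∃ i j : Fin (m - 1), (i.val + 2 ≤ j.val ∨ j.val + 2 ≤ i.val) ∧
        r = of i * of j * (of j * of i)⁻¹} ∪
  {r | ∃ i j : Fin (m - 1), (i.val + 1 = j.val ∨ j.val + 1 = i.val) ∧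
        r = of i * of j * of i * (of j * of i * of j)⁻¹}

/-- The braid group on `m` strands. -/
abbrev BraidGroup (m : ℕ) := PresentedGroup (braidRels m)

/-- The Artin generator `σ_i` (1-based index `1 ≤ i ≤ m-1`); junk value `1` out of range. -/
def braidGen (m : ℕ) (i : ℕ) : BraidGroup m :=
  if h : 1 ≤ i ∧ i ≤ m - 1 then PresentedGroup.of ⟨i - 1, by omega⟩ else 1

/-- A braid is periodic if some positive power of it is central. -/
def IsPeriodic {m : ℕ} (β : BraidGroup m) : Prop :=
  ∃ k : ℕ, 1 ≤ k ∧ β ^ k ∈ Subgroup.center (BraidGroup m)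

/-- The elementary Hurwitz move at (0-based) position `i`, as a bijection on `n`-tuples. -/
def hEquiv {G : Type*} [Group G] {n : ℕ} (i : Fin (n - 1)) : Equiv.Perm (Fin n → G) where
  toFun s := fun k =>
    if k.val = i.val then s ⟨i.val + 1, by have := i.isLt; omega⟩
    else if k.val = i.val + 1 then
      (s ⟨i.val + 1, by have := i.isLt; omega⟩)⁻¹ * s ⟨i.val, by have := i.isLt; omega⟩ *
        s ⟨i.val + 1, by have := i.isLt; omega⟩
    else s k
  invFun t := fun k =>
    if k.val = i.val then
      t ⟨i.val, by have := i.isLt; omega⟩ * t ⟨i.val + 1, by have := i.isLt; omega⟩ *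
        (t ⟨i.val, by have := i.isLt; omega⟩)⁻¹
    else if k.val = i.val + 1 then t ⟨i.val, by have := i.isLt; omega⟩
    else t k
  left_inv s := by
    funext k
    have hlt := i.isLt
    rcases k with ⟨kv, hkv⟩
    by_cases h1 : kv = i.val
    · subst h1
      simp [mul_assoc]
    · by_cases h2 : kv = i.val + 1
      · subst h2
        simp
      · simp [h1, h2]
  right_inv t := by
    funext k
    have hlt := i.isLt
    rcases k with ⟨kv, hkv⟩
    by_cases h1 : kv = i.val
    · subst h1
      simp [mul_assoc]
    · by_cases h2 : kv = i.val + 1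
      · subst h2
        simp [mul_assoc]
      · simp [h1, h2]

/-- The (right) Hurwitz action of a word in the generators `σ_1, …, σ_{n-1}` of `B_n`
on `n`-tuples of elements of a group `G`: `hurwitzAct (w₁ * w₂) s = hurwitzAct w₂ (hurwitzAct w₁ s)`. -/
def hurwitzAct {G : Type*} [Group G] {n : ℕ} (w : FreeGroup (Fin (n - 1))) (s : Fin n → G) :
    Fin n → G :=
  (MulOpposite.unop (FreeGroup.lift (fun i => MulOpposite.op (hEquiv (G := G) (n := n) i)) w)) s

/-- The Hurwitz orbit of a braid system. -/
def hurwitzOrbit {G : Type*} [Group G] {n : ℕ} (s : Fin n → G) : Set (Fin n → G) :=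
  {t | ∃ w : FreeGroup (Fin (n - 1)), hurwitzAct w s = t}

/-- The generator `σ_i` (1-based) as a word acting on length-`n` systems. -/
def genWord (n : ℕ) (i : ℕ) : FreeGroup (Fin (n - 1)) :=
  if h : 1 ≤ i ∧ i ≤ n - 1 then FreeGroup.of ⟨i - 1, by omega⟩ else 1

/-- The pure braid word `c_i = (σ_1⁻¹ ⋯ σ_{i-1}⁻¹) σ_i² (σ_{i-1} ⋯ σ_1)`. -/
def cWord (n : ℕ) (i : ℕ) : FreeGroup (Fin (n - 1)) :=
  ((List.range (i - 1)).map (fun t => (genWord n (t + 1))⁻¹)).prod *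
    genWord n i ^ 2 *
    ((List.range (i - 1)).reverse.map (fun t => genWord n (t + 1))).prod

/-- The word `Δ_{(i,j)} = (σ_i σ_{i+1} ⋯ σ_j)(σ_i ⋯ σ_{j-1}) ⋯ (σ_i σ_{i+1})(σ_i)`. -/
def deltaWord (n i j : ℕ) : FreeGroup (Fin (n - 1)) :=
  ((List.range (j - i + 1)).map (fun t =>
    ((List.range (j - t - i + 1)).map (fun u => genWord n (i + u))).prod)).prod

/-- The exponent-sum homomorphism, valued in `Multiplicative ℤ`. -/
def expSumHom {m : ℕ} : BraidGroup m →* Multiplicative ℤ :=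
  PresentedGroup.toGroup (f := fun _ => Multiplicative.ofAdd 1) (by
    rintro r (⟨i, j, -, rfl⟩ | ⟨i, j, -, rfl⟩) <;>
      simp <;> group)

/-- The exponent sum of a braid: `e(σ_i) = 1`. -/
def esum {m : ℕ} (β : BraidGroup m) : ℤ := Multiplicative.toAdd (expSumHom β)

/-- A braid system is reducible if some non-trivial partition of the index set has all
entries from the two parts commuting. -/
def IsReducible {G : Type*} [Group G] {n : ℕ} (s : Fin n → G) : Prop :=
  ∃ I : Set (Fin n), I.Nonempty ∧ Iᶜ.Nonempty ∧ ∀ i ∈ I, ∀ j ∈ Iᶜ, Commute (s i) (s j)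

/-!
The group `B₃` acts on `ℤ²` through `SL(2, ℤ)`, and a braid is determined by its image in
`PSL(2, ℤ)` together with its exponent sum. Hurwitz moves permute the exponent sums, so a finite
orbit is at most `3! = 6` times as large as its image in `PSL(2, ℤ)`, and it suffices to bound the
latter by `27`.

Conjugating by powers of the product of two entries stays in the orbit, so finiteness forces the
product of two noncommuting entries, anywhere in the orbit, to be elliptic: its trace is `0` or
`±1`, and which of the two happens is decided by the sign character of `SL(2, ℤ/2) ≅ S₃`. Fricke's
relation between the traces of `A`, `B`, `C`, `AB`, `BC`, `AC`, `ABC` has no solution of this kind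
unless some triple of the orbit has a commuting pair. For a triple `(A, B, C)` with `A` and `B`
commuting, either `C` inverts both `A` and `B`, or the trace relations determine the traces up to a
parameter, and then up to order and modulo signs `(A, B, C)` is `(a, a, c)` or `(a, a², c)` with two
words in `a` and `c` of orders `2` and `3`. The orbits of these four kinds of triples have at most
`24`, `8`, `18` and `27` elements.
-/

namespace BraidSystem

open scoped Matrix MatrixGroups commutatorElement
open Matrix (trace_fin_two det_fin_two)

/-! ### Traces in `SL(2, R)` -/

section Trace

variable {R : Type*} [CommRing R]

/-- The trace of an element of `SL(2, R)`. -/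
def tr (X : SL(2, R)) : R := (X : Matrix (Fin 2) (Fin 2) R).trace

lemma tr_eq_add (X : SL(2, R)) : tr X = X 0 0 + X 1 1 := trace_fin_two _

lemma entries_det_eq_one (X : SL(2, R)) : X 0 0 * X 1 1 - X 0 1 * X 1 0 = 1 := by
  rw [← det_fin_two, X.det_coe]

lemma tr_one : tr (1 : SL(2, R)) = 2 := by
  simp [tr]

lemma tr_neg (X : SL(2, R)) : tr (-X) = -tr X := by
  simp [tr]

lemma tr_mul_comm (X Y : SL(2, R)) : tr (X * Y) = tr (Y * X) :=
  Matrix.trace_mul_comm _ _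

lemma tr_inv (X : SL(2, R)) : tr X⁻¹ = tr X := by
  simp [tr_eq_add, Matrix.SpecialLinearGroup.coe_inv, Matrix.adjugate_fin_two, add_comm]

lemma tr_conj (X Y : SL(2, R)) : tr (Y⁻¹ * X * Y) = tr X := by
  rw [tr_mul_comm, mul_inv_cancel_left]

lemma tr_conj' (X Y : SL(2, R)) : tr (Y * X * Y⁻¹) = tr X := by
  rw [tr_mul_comm, inv_mul_cancel_left]

lemma coe_add_coe_inv (X : SL(2, R)) :
    (X : Matrix (Fin 2) (Fin 2) R) + (X⁻¹ : SL(2, R)) = tr X • 1 := by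
  ext i j
  fin_cases i <;> fin_cases j <;>
    simp [tr_eq_add, Matrix.SpecialLinearGroup.coe_inv, Matrix.adjugate_fin_two, add_comm]

lemma coe_mul_self (X : SL(2, R)) :
    (X * X : Matrix (Fin 2) (Fin 2) R) = tr X • (X : Matrix (Fin 2) (Fin 2) R) - 1 := by
  have h := congrArg ((X : Matrix (Fin 2) (Fin 2) R) * ·) (coe_add_coe_inv X)
  simp only [mul_add, ← Matrix.SpecialLinearGroup.coe_mul, mul_inv_cancel,
    Matrix.SpecialLinearGroup.coe_one, Matrix.mul_smul, mul_one] at h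
  rw [← h, ← Matrix.SpecialLinearGroup.coe_mul, add_sub_cancel_right]

lemma tr_mul_add_tr_mul_inv (X Y : SL(2, R)) : tr (X * Y) + tr (X * Y⁻¹) = tr X * tr Y := by
  simp only [tr, Matrix.SpecialLinearGroup.coe_mul, ← Matrix.trace_add, ← mul_add,
    coe_add_coe_inv Y, Matrix.mul_smul, mul_one, Matrix.trace_smul, smul_eq_mul, mul_comm]

lemma tr_mul_inv (X Y : SL(2, R)) : tr (X * Y⁻¹) = tr X * tr Y - tr (X * Y) :=
  eq_sub_of_add_eq' (tr_mul_add_tr_mul_inv X Y)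

lemma tr_mul_self (X : SL(2, R)) : tr (X * X) = tr X ^ 2 - 2 := by
  linear_combination tr_mul_add_tr_mul_inv X X - (congrArg tr (mul_inv_cancel X)).trans tr_one

lemma tr_mul_self_mul (X Y : SL(2, R)) : tr (X * X * Y) = tr X * tr (X * Y) - tr Y := by
  have h := tr_mul_add_tr_mul_inv (X * Y) X
  rw [tr_conj', tr_mul_comm, ← mul_assoc] at h
  linear_combination h

/-- Fricke's polynomial: the trace of a commutator in terms of the traces of its two entries and
of their product. -/
def commTrace (p q x : R) : R := p ^ 2 + q ^ 2 + x ^ 2 - p * q * x - 2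

lemma tr_commutator (A B : SL(2, R)) : tr ⁅A, B⁆ = commTrace (tr A) (tr B) (tr (A * B)) := by
  have h₁ := tr_mul_inv (A * B * A⁻¹) B
  have h₂ := tr_mul_inv (A * B) (B⁻¹ * A)
  rw [show A * B * (B⁻¹ * A)⁻¹ = A * B * A⁻¹ * B by group,
    show A * B * (B⁻¹ * A) = A * A by group, tr_mul_comm B⁻¹ A, tr_mul_inv, tr_mul_self] at h₂
  rw [commutatorElement_def, h₁, h₂, tr_conj', commTrace]
  ring

lemma commTrace_of_commute {A B : SL(2, R)} (h : Commute A B) :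
    commTrace (tr A) (tr B) (tr (A * B)) = 2 := by
  rw [← tr_commutator, commutatorElement_eq_one_iff_commute.2 h, tr_one]

lemma tr_mul_conj_mul (A B C : SL(2, R)) : tr (A * (C⁻¹ * B * C)) =
    tr A * tr B + tr C * tr (A * B * C) - tr (B * C) * tr (A * C) - tr (A * B) := by
  have h₁ : tr (A * (C⁻¹ * B * C)) = tr (B * C * A * C⁻¹) := by
    rw [show A * (C⁻¹ * B * C) = A * C⁻¹ * (B * C) by group, tr_mul_comm, ← mul_assoc]
  have h₂ : tr (B * C * A) = tr (A * B * C) := by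
    rw [tr_mul_comm, ← mul_assoc]
  have h₃ := tr_mul_inv (B * C) (A * C)
  rw [show B * C * (A * C)⁻¹ = B * A⁻¹ by group, ← mul_assoc, tr_mul_inv, tr_mul_comm B A] at h₃
  rw [h₁, tr_mul_inv, h₂]
  linear_combination -h₃

lemma tr_conj'_mul (A B C : SL(2, R)) : tr (A * B * A⁻¹ * C) =
    tr B * tr C + tr A * tr (A * B * C) - tr (A * B) * tr (A * C) - tr (B * C) := by
  rw [show A * B * A⁻¹ * C = A * (B * A⁻¹ * C) by group, tr_mul_comm,
    show B * A⁻¹ * C * A = B * (A⁻¹ * C * A) by group, tr_mul_conj_mul, tr_mul_comm B A,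
    tr_mul_comm C A, tr_mul_comm (B * C) A, ← mul_assoc]
  ring

lemma tr_conj_mul (A B C : SL(2, R)) : tr (B⁻¹ * A * B * C) =
    tr A * tr C + tr B * tr (A * B * C) - tr (A * B) * tr (B * C) - tr (A * C) := by
  rw [tr_mul_comm, tr_mul_conj_mul, tr_mul_comm C B, tr_mul_comm C A, mul_assoc C,
    tr_mul_comm C (A * B)]
  ring

lemma tr_conj_mul_self_inv (B C : SL(2, R)) :
    tr (C⁻¹ * B * C * B⁻¹) = commTrace (tr B) (tr C) (tr (B * C)) := by
  rw [← tr_commutator, tr_mul_comm, show B⁻¹ * (C⁻¹ * B * C) = (C * B)⁻¹ * (B * C) by group,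
    tr_mul_comm, commutatorElement_def]
  group

lemma tr_mul_mul_add (A B C : SL(2, R)) : tr (A * B * C) + tr (A * C * B) =
    tr A * tr (B * C) + tr B * tr (A * C) + tr C * tr (A * B) - tr A * tr B * tr C := by
  have h₁ := tr_mul_inv (A * B) C
  have h₂ := tr_mul_inv A (C * B⁻¹)
  have h₃ := tr_mul_inv (A * C) B
  rw [show A * (C * B⁻¹)⁻¹ = A * B * C⁻¹ by group, ← mul_assoc, tr_mul_inv C, tr_mul_comm C B]
    at h₂
  linear_combination h₁ - h₂ + h₃

lemma tr_mul_self_mul_mul (A B C : SL(2, R)) : tr (B * A * B * C * (A * C)) =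
    tr (A * C) * (tr (A * B) * tr (B * C) - tr A * tr C + tr (A * C))
      - tr A * (tr B * tr (A * B) - tr A) + tr (A * B) ^ 2 - 2 := by
  have h₁ := tr_mul_inv (B * A * B * C) (A * C)
  have h₂ := tr_mul_inv (B * A) (B * C)⁻¹
  have h₃ := tr_mul_inv (B * A * B) A
  have h₄ := tr_mul_inv (B * A) B
  have h₅ := tr_mul_self (B * A)
  rw [show B * A * B * C * (A * C)⁻¹ = B * A * B * A⁻¹ by group] at h₁
  rw [inv_inv, show B * A * (B * C)⁻¹ = B * (A * C⁻¹) * B⁻¹ by group, tr_conj', tr_inv,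
    tr_mul_inv, tr_mul_comm B A, ← mul_assoc] at h₂
  rw [tr_conj', tr_mul_comm B A] at h₄
  rw [← mul_assoc, tr_mul_comm B A] at h₅
  linear_combination h₁ + tr (A * C) * h₂ - h₃ - tr A * h₄ + h₅

lemma tr_mul_mul_mul (A B C : SL(2, R)) : tr (A * B * C) * tr (A * C * B) =
    tr (A * B) * tr (B * C) * tr (A * C) + tr (A * B) ^ 2 + tr (B * C) ^ 2 + tr (A * C) ^ 2
    - tr A * tr B * tr (A * B) - tr B * tr C * tr (B * C) - tr A * tr C * tr (A * C)
    + tr A ^ 2 + tr B ^ 2 + tr C ^ 2 - 4 := by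
  have h₁ := tr_mul_inv (A * B * C) (A * C * B)
  rw [show A * B * C * (A * C * B)⁻¹ = A * ⁅B, C⁆ * A⁻¹ by rw [commutatorElement_def]; group,
    tr_conj', tr_commutator, show A * B * C * (A * C * B) = A * B * C * (A * C) * B by group,
    tr_mul_comm (A * B * C * (A * C)) B,
    show B * (A * B * C * (A * C)) = B * A * B * C * (A * C) by group,
    tr_mul_self_mul_mul, commTrace] at h₁
  linear_combination -h₁

lemma tr_fricke (A B C : SL(2, R)) :
    tr (A * B) * tr (B * C) * tr (A * C) + tr (A * B) ^ 2 + tr (B * C) ^ 2 + tr (A * C) ^ 2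
    - (tr A * tr B + tr C * tr (A * B * C)) * tr (A * B)
    - (tr B * tr C + tr A * tr (A * B * C)) * tr (B * C)
    - (tr A * tr C + tr B * tr (A * B * C)) * tr (A * C)
    + tr A ^ 2 + tr B ^ 2 + tr C ^ 2 + tr (A * B * C) ^ 2
    + tr A * tr B * tr C * tr (A * B * C) = 4 := by
  linear_combination tr (A * B * C) * tr_mul_mul_add A B C - tr_mul_mul_mul A B C

lemma det_coe_sub_coe (X Y : SL(2, R)) :
    ((X : Matrix (Fin 2) (Fin 2) R) - Y).det = 2 - tr (X * Y⁻¹) := by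
  have hX := entries_det_eq_one X
  have hY := entries_det_eq_one Y
  simp only [tr_eq_add, det_fin_two, Matrix.SpecialLinearGroup.coe_mul, Matrix.mul_apply,
    Fin.sum_univ_two, Matrix.SpecialLinearGroup.coe_inv, Matrix.adjugate_fin_two, Matrix.sub_apply,
    Matrix.of_apply, Matrix.cons_val', Matrix.cons_val_zero, Matrix.cons_val_one,
    Matrix.cons_val_fin_one]
  linear_combination hX + hY

end Trace

/-! ### Commutation in `SL(2, R)` -/

section Commute

variable {R : Type*} [CommRing R]

lemma mem_center_iff_entries {X : SL(2, R)} :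
    X ∈ Subgroup.center SL(2, R) ↔ X 0 1 = 0 ∧ X 1 0 = 0 ∧ X 0 0 = X 1 1 := by
  rw [Matrix.SpecialLinearGroup.mem_center_iff]
  constructor
  · rintro ⟨r, -, h⟩
    simp [← h]
  · rintro ⟨h01, h10, h11⟩
    refine ⟨X 0 0, ?_, ?_⟩
    · have h := entries_det_eq_one X
      rwa [h01, ← h11, zero_mul, sub_zero, ← sq] at h
    · ext i j
      fin_cases i <;> fin_cases j <;> simp [h01, h10, h11]

/-- Off-diagonal entries and difference of the diagonal ones form a vector attached to each matrix;
commuting means that these vectors are parallel. -/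
lemma commute_iff_entries {X Y : SL(2, R)} : Commute X Y ↔
    X 0 1 * Y 1 0 = Y 0 1 * X 1 0 ∧
    X 0 1 * (Y 0 0 - Y 1 1) = Y 0 1 * (X 0 0 - X 1 1) ∧
    X 1 0 * (Y 0 0 - Y 1 1) = Y 1 0 * (X 0 0 - X 1 1) := by
  simp only [Commute, SemiconjBy, Matrix.SpecialLinearGroup.ext_iff, Fin.forall_fin_two,
    Matrix.SpecialLinearGroup.coe_mul, Matrix.mul_apply, Fin.sum_univ_two]
  grind

lemma commute_mul_left_iff {G : Type*} [Group G] {a b : G} : Commute (a * b) a ↔ Commute a b := by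
  rw [commute_iff_eq, mul_assoc, mul_left_cancel_iff, commute_iff_eq, eq_comm]

variable [IsDomain R]

lemma mem_center_iff_eq_one_or_eq_neg_one {X : SL(2, R)} :
    X ∈ Subgroup.center SL(2, R) ↔ X = 1 ∨ X = -1 := by
  rw [mem_center_iff_entries]
  constructor
  · rintro ⟨h01, h10, h11⟩
    have h := entries_det_eq_one X
    rw [h01, ← h11, zero_mul, sub_zero, mul_self_eq_one_iff] at h
    refine h.imp (fun h => ?_) (fun h => ?_) <;> ext i j <;> fin_cases i <;> fin_cases j <;>
      simp [h01, h10, ← h11, h]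
  · rintro (rfl | rfl) <;> simp

lemma commute_trans {X Y Z : SL(2, R)} (hX : X ∉ Subgroup.center SL(2, R)) (hY : Commute X Y)
    (hZ : Commute X Z) : Commute Y Z := by
  rw [commute_iff_entries] at *
  have hne : X 0 1 ≠ 0 ∨ X 1 0 ≠ 0 ∨ X 0 0 - X 1 1 ≠ 0 := by
    by_contra! h
    exact hX (mem_center_iff_entries.2 ⟨h.1, h.2.1, sub_eq_zero.1 h.2.2⟩)
  rcases hne with h | h | h <;> refine ⟨?_, ?_, ?_⟩ <;> refine mul_left_cancel₀ h ?_ <;> grind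

lemma tr_sq_eq_four_of_commute {A B : SL(2, R)} (hA : A ∉ Subgroup.center SL(2, R))
    (h : Commute A B) (hp : tr A ^ 2 = 4) : tr B ^ 2 = 4 := by
  rw [commute_iff_entries] at h
  have discriminant (X : SL(2, R)) :
      tr X ^ 2 - 4 = (X 0 0 - X 1 1) ^ 2 + 4 * (X 0 1 * X 1 0) := by
    rw [tr_eq_add]
    linear_combination 4 * entries_det_eq_one X
  have hdA := discriminant A
  rw [← sub_eq_zero, discriminant]
  have hne : A 0 1 ≠ 0 ∨ A 1 0 ≠ 0 := by
    by_contra! hoff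
    have : (A 0 0 - A 1 1) ^ 2 = 0 := by rw [hp, hoff.1] at hdA; linear_combination -hdA
    exact hA (mem_center_iff_entries.2
      ⟨hoff.1, hoff.2, sub_eq_zero.1 (pow_eq_zero_iff two_ne_zero |>.1 this)⟩)
  rcases hne with hne | hne <;> refine mul_left_cancel₀ (pow_ne_zero 2 hne) ?_ <;> grind

lemma tr_sq_eq_four_iff_of_commute {A B : SL(2, R)} (hA : A ∉ Subgroup.center SL(2, R))
    (hB : B ∉ Subgroup.center SL(2, R)) (h : Commute A B) : tr A ^ 2 = 4 ↔ tr B ^ 2 = 4 :=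
  ⟨tr_sq_eq_four_of_commute hA h, tr_sq_eq_four_of_commute hB h.symm⟩

/-- `X = C⁻¹BC` is annihilated by `(X - B)(X - B⁻¹)`, and `X - B` is injective. -/
lemma conj_eq_inv_of_commute {B C : SL(2, R)} (hF : commTrace (tr B) (tr C) (tr (B * C)) ≠ 2)
    (hc : Commute (C⁻¹ * B * C) B) : C⁻¹ * B * C = B⁻¹ := by
  set X := C⁻¹ * B * C with hX
  have hdet : ((X : Matrix (Fin 2) (Fin 2) R) - B).det ≠ 0 := by
    rw [det_coe_sub_coe, hX, tr_conj_mul_self_inv]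
    exact sub_ne_zero.2 hF.symm
  have hprod : ((X : Matrix (Fin 2) (Fin 2) R) - B) * (X - (B⁻¹ : SL(2, R))) = 0 := by
    have hcoe := congrArg (fun Z : SL(2, R) => (Z : Matrix (Fin 2) (Fin 2) R)) hc.eq
    simp only [Matrix.SpecialLinearGroup.coe_mul] at hcoe
    rw [eq_sub_of_add_eq' (coe_add_coe_inv B), sub_mul, mul_sub, mul_sub, mul_sub, mul_sub,
      coe_mul_self X, coe_mul_self B, hcoe, hX, tr_conj]
    simp only [Matrix.mul_smul, mul_one]
    abel
  have hreg := (Matrix.isRegular_of_isLeftRegular_det (IsRegular.of_ne_zero hdet).left).left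
  exact Subtype.ext (sub_eq_zero.1 (hreg (hprod.trans (mul_zero _).symm)))

end Commute

/-! ### Elliptic elements over ordered rings -/

section Ordered

variable {R : Type*} [CommRing R] [LinearOrder R] [IsStrictOrderedRing R]

/-- The trace form is definite on the orthogonal complement of `1` and an elliptic `E`. -/
lemma eq_zero_of_trace_eq_zero {E : SL(2, R)} {M : Matrix (Fin 2) (Fin 2) R} (hE : |tr E| < 2)
    (hM : M.trace = 0) (hEM : ((E : Matrix (Fin 2) (Fin 2) R) * M).trace = 0)
    (hdet : 0 ≤ M.det) : M = 0 := by
  have hd := entries_det_eq_one E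
  have hdisc : (E 0 0 - E 1 1) ^ 2 + 4 * (E 0 1 * E 1 0) < 0 := by
    rw [tr_eq_add, abs_lt] at hE
    nlinarith
  have hE10 : E 1 0 ≠ 0 := fun h => by
    rw [h] at hdisc
    nlinarith [sq_nonneg (E 0 0 - E 1 1)]
  have hM11 : M 1 1 = -M 0 0 := by rw [trace_fin_two] at hM; linear_combination hM
  simp only [trace_fin_two, Matrix.mul_apply, Fin.sum_univ_two, det_fin_two, hM11] at hEM hdet
  have hsquares : (2 * E 1 0 * M 0 0 - (E 0 0 - E 1 1) * M 1 0) ^ 2 =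
      ((E 0 0 - E 1 1) ^ 2 + 4 * (E 0 1 * E 1 0)) * M 1 0 ^ 2
        - 4 * E 1 0 ^ 2 * (M 0 0 * -M 0 0 - M 0 1 * M 1 0) := by
    linear_combination -4 * E 1 0 * M 1 0 * hEM
  have hM10 : M 1 0 = 0 := by
    by_contra h
    have := mul_neg_of_neg_of_pos hdisc (by positivity : 0 < M 1 0 ^ 2)
    have := mul_nonneg (by positivity : 0 ≤ 4 * E 1 0 ^ 2) hdet
    nlinarith [sq_nonneg (2 * E 1 0 * M 0 0 - (E 0 0 - E 1 1) * M 1 0)]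
  have hM00 : M 0 0 = 0 := by
    rw [hM10] at hdet
    nlinarith [sq_nonneg (M 0 0)]
  have hM01 : M 0 1 = 0 := by
    rw [hM10, hM00] at hEM
    exact (mul_eq_zero.1 (show E 1 0 * M 0 1 = 0 by linear_combination hEM)).resolve_left hE10
  ext i j
  fin_cases i <;> fin_cases j <;> simp [hM00, hM01, hM10, hM11]

lemma eq_of_tr_eq {E X Y : SL(2, R)} (hE : |tr E| < 2) (ht : tr X = tr Y)
    (hEX : tr (E * X) = tr (E * Y)) (hXY : tr (X * Y⁻¹) = 2) : X = Y := by
  refine Subtype.ext (sub_eq_zero.1 (eq_zero_of_trace_eq_zero hE ?_ ?_ ?_))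
  · rw [Matrix.trace_sub]
    exact sub_eq_zero.2 ht
  · rw [mul_sub, Matrix.trace_sub]
    exact sub_eq_zero.2 hEX
  · exact (det_coe_sub_coe X Y).trans (by rw [hXY, sub_self]) |>.ge

lemma two_lt_tr_commutator {A B : SL(2, R)} (hA : |tr A| < 2) (hAB : ¬ Commute A B) :
    2 < tr ⁅A, B⁆ := by
  contrapose! hAB
  refine Subtype.ext (sub_eq_zero.1 (eq_zero_of_trace_eq_zero hA ?_ ?_ ?_))
  · rw [Matrix.trace_sub]
    exact sub_eq_zero.2 (tr_mul_comm A B)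
  · rw [mul_sub, Matrix.trace_sub]
    exact sub_eq_zero.2 ((tr_mul_comm A (A * B)).trans (congrArg tr (mul_assoc A B A)))
  · have h := det_coe_sub_coe (A * B) (B * A)
    rw [show A * B * (B * A)⁻¹ = ⁅A, B⁆ by rw [commutatorElement_def]; group] at h
    exact h.trans_ge (sub_nonneg.2 hAB)

lemma two_lt_commTrace {A B : SL(2, R)} (hE : |tr (A * B)| < 2) (hAB : ¬ Commute A B) :
    2 < commTrace (tr A) (tr B) (tr (A * B)) := by
  rw [← tr_commutator, show ⁅A, B⁆ = ⁅A * B, A⁻¹⁆ by simp only [commutatorElement_def]; group]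
  refine two_lt_tr_commutator hE fun h => hAB ?_
  rwa [Commute.inv_right_iff, commute_mul_left_iff] at h

lemma exists_coe_pow_succ_eq {X : SL(2, R)} (hX : 2 ≤ |tr X|) (k : ℕ) :
    ∃ u v : R, |v| < |u| ∧
      ((X ^ (k + 1) : SL(2, R)) : Matrix (Fin 2) (Fin 2) R) = u • X.val - v • 1 := by
  induction k with
  | zero => exact ⟨1, 0, by simp, by simp⟩
  | succ k ih =>
    obtain ⟨u, v, hlt, h⟩ := ih
    refine ⟨u * tr X - v, u, ?_, ?_⟩
    · have := abs_sub_abs_le_abs_sub (u * tr X) v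
      rw [abs_mul] at this
      nlinarith [abs_nonneg u]
    · rw [pow_succ, Matrix.SpecialLinearGroup.coe_mul, h, sub_mul, Matrix.smul_mul,
        Matrix.smul_mul, coe_mul_self, one_mul]
      module

lemma commute_of_commute_pow {X A : SL(2, R)} (hX : 2 ≤ |tr X|) {k : ℕ} (hk : k ≠ 0)
    (h : Commute (X ^ k) A) : Commute X A := by
  obtain ⟨k, rfl⟩ := Nat.exists_eq_succ_of_ne_zero hk
  obtain ⟨u, v, hlt, hpow⟩ := exists_coe_pow_succ_eq hX k
  have hu : u ≠ 0 := abs_pos.1 ((abs_nonneg v).trans_lt hlt)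
  have hcoe := congrArg (fun Z : SL(2, R) => (Z : Matrix (Fin 2) (Fin 2) R)) h.eq
  simp only [Matrix.SpecialLinearGroup.coe_mul, hpow, sub_mul, mul_sub, Matrix.smul_mul,
    Matrix.mul_smul, one_mul, mul_one, sub_left_inj] at hcoe
  exact Subtype.ext (smul_right_injective _ hu hcoe)

end Ordered

/-! ### The projective group -/

section Projective

variable {R : Type*} [CommRing R]

/-- The projection `SL(2, R) → PSL(2, R)`. -/
def toPSL : SL(2, R) →* PSL(2, R) := QuotientGroup.mk' _

lemma toPSL_neg (X : SL(2, R)) : toPSL (-X) = toPSL X :=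
  QuotientGroup.eq.2 <| mem_center_iff_entries.2 <| by simp

lemma toPSL_eq_one_iff [IsDomain R] {X : SL(2, R)} : toPSL X = 1 ↔ X = 1 ∨ X = -1 := by
  rw [← mem_center_iff_eq_one_or_eq_neg_one]
  exact QuotientGroup.eq_one_iff X

end Projective

/-! ### The representation of the braid group on three strands -/

/-- The first Artin generator of the braid group on three strands. -/
def σ₁ : BraidGroup 3 := braidGen 3 1

/-- The second Artin generator of the braid group on three strands. -/
def σ₂ : BraidGroup 3 := braidGen 3 2

/-- The half twist, whose square generates the centre of the braid group on three strands. -/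
def halfTwist : BraidGroup 3 := σ₁ * σ₂ * σ₁

/-- The transvections that represent the two Artin generators. -/
def braidGenMatrix : Fin 2 → SL(2, ℤ) :=
  ![⟨!![1, 1; 0, 1], by simp⟩, ⟨!![1, 0; -1, 1], by simp⟩]

lemma braidGenMatrix_braid_relation :
    braidGenMatrix 0 * braidGenMatrix 1 * braidGenMatrix 0 =
      braidGenMatrix 1 * braidGenMatrix 0 * braidGenMatrix 1 := by
  decide

/-- The reduced Burau representation at `t = -1`, which is faithful modulo centres. -/
def braidToSL : BraidGroup 3 →* SL(2, ℤ) :=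
  PresentedGroup.toGroup (f := braidGenMatrix) (by
    rintro r (⟨i, j, h, rfl⟩ | ⟨i, j, h, rfl⟩)
    · omega
    · simp only [map_mul, map_inv, FreeGroup.lift_apply_of, mul_inv_eq_one]
      fin_cases i <;> fin_cases j
      · simp at h
      · exact braidGenMatrix_braid_relation
      · exact braidGenMatrix_braid_relation.symm
      · simp at h)

/-- The projectivisation of `braidToSL`. -/
def braidToPSL : BraidGroup 3 →* PSL(2, ℤ) := toPSL.comp braidToSL

lemma coe_braidToSL_σ₁ : (braidToSL σ₁ : Matrix (Fin 2) (Fin 2) ℤ) = !![1, 1; 0, 1] := by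
  simp [braidToSL, σ₁, braidGen, braidGenMatrix]

lemma coe_braidToSL_σ₂ : (braidToSL σ₂ : Matrix (Fin 2) (Fin 2) ℤ) = !![1, 0; -1, 1] := by
  simp [braidToSL, σ₂, braidGen, braidGenMatrix]

lemma coe_braidToSL_halfTwist :
    (braidToSL halfTwist : Matrix (Fin 2) (Fin 2) ℤ) = !![0, 1; -1, 0] := by
  simp [halfTwist, coe_braidToSL_σ₁, coe_braidToSL_σ₂]

lemma braid_relation : σ₁ * σ₂ * σ₁ = σ₂ * σ₁ * σ₂ := by
  have h : PresentedGroup.mk (braidRels 3) _ = 1 :=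
    PresentedGroup.one_of_mem (Or.inr ⟨⟨0, by decide⟩, ⟨1, by decide⟩, by simp, rfl⟩)
  simp only [map_mul, map_inv, mul_inv_eq_one] at h
  exact h

lemma σ₁_mul_halfTwist : σ₁ * halfTwist = halfTwist * σ₂ :=
  calc σ₁ * (σ₁ * σ₂ * σ₁) = σ₁ * (σ₂ * σ₁ * σ₂) := by rw [braid_relation]
    _ = σ₁ * σ₂ * σ₁ * σ₂ := by group

lemma σ₂_mul_halfTwist : σ₂ * halfTwist = halfTwist * σ₁ := by
  rw [halfTwist, ← mul_assoc, ← mul_assoc, ← braid_relation]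

/-- The product of a list of letters `σ₁` (`true`) and `σ₂⁻¹` (`false`). -/
def alternatingWord (l : List Bool) : BraidGroup 3 := (l.map fun c => if c then σ₁ else σ₂⁻¹).prod

/-- The braids of the form `Δᵐ w Δⁿ` with `Δ` the half twist and `w` an alternating word; this
turns out to be every braid. -/
def HasNormalForm (x : BraidGroup 3) : Prop :=
  ∃ (m n : ℤ) (l : List Bool), x = halfTwist ^ m * alternatingWord l * halfTwist ^ n

lemma HasNormalForm.halfTwist_zpow_mul {x : BraidGroup 3} (h : HasNormalForm x) (k : ℤ) :
    HasNormalForm (halfTwist ^ k * x) := by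
  obtain ⟨m, n, l, rfl⟩ := h
  exact ⟨k + m, n, l, by rw [zpow_add]; group⟩

lemma hasNormalForm_σ₂_mul (l : List Bool) (n : ℤ) :
    HasNormalForm (σ₂ * alternatingWord l * halfTwist ^ n) := by
  match l with
  | [] =>
    refine ⟨1, n - 1, [true], ?_⟩
    have h : σ₂ = halfTwist * σ₁ * halfTwist⁻¹ := eq_mul_inv_of_mul_eq σ₂_mul_halfTwist
    rw [h]
    simp only [alternatingWord, List.map_nil, List.prod_nil, List.map_cons, List.prod_cons, if_true]
    group
  | true :: l =>
    refine ⟨1, n, false :: l, ?_⟩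
    have h : σ₂ * σ₁ = halfTwist * σ₂⁻¹ := by
      rw [halfTwist, braid_relation, mul_inv_cancel_right]
    simp [alternatingWord, ← mul_assoc, h]
  | false :: l => exact ⟨0, n, l, by simp [alternatingWord]⟩

lemma commute_σ₁_halfTwist_zpow (k : ℤ) : Commute σ₁ (halfTwist ^ (2 * k)) := by
  rw [zpow_mul]
  refine Commute.zpow_right ?_ k
  rw [zpow_two, commute_iff_eq, ← mul_assoc, σ₁_mul_halfTwist, mul_assoc, σ₂_mul_halfTwist,
    ← mul_assoc]

lemma HasNormalForm.σ₁_mul {x : BraidGroup 3} (h : HasNormalForm x) : HasNormalForm (σ₁ * x) := by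
  obtain ⟨m, n, l, rfl⟩ := h
  rcases Int.even_or_odd' m with ⟨k, rfl | rfl⟩
  · refine ⟨2 * k, n, true :: l, ?_⟩
    simp only [alternatingWord, List.map_cons, List.prod_cons, if_true, ← mul_assoc,
      (commute_σ₁_halfTwist_zpow k).eq]
  · have h : σ₁ * (halfTwist ^ (2 * k + 1) * alternatingWord l * halfTwist ^ n) =
        halfTwist ^ (2 * k + 1) * (σ₂ * alternatingWord l * halfTwist ^ n) := by
      simp only [zpow_add_one, ← mul_assoc, (commute_σ₁_halfTwist_zpow k).eq]
      rw [mul_assoc _ σ₁, σ₁_mul_halfTwist, mul_assoc _ halfTwist σ₂]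
    exact h ▸ (hasNormalForm_σ₂_mul l n).halfTwist_zpow_mul _

lemma HasNormalForm.σ₂_mul {x : BraidGroup 3} (h : HasNormalForm x) : HasNormalForm (σ₂ * x) := by
  have e : σ₂ * x = halfTwist ^ (1 : ℤ) * (σ₁ * (halfTwist ^ (-1 : ℤ) * x)) := by
    rw [zpow_one, ← mul_assoc, ← σ₂_mul_halfTwist]
    group
  exact e ▸ (h.halfTwist_zpow_mul _).σ₁_mul.halfTwist_zpow_mul _

lemma HasNormalForm.σ₁_inv_mul {x : BraidGroup 3} (h : HasNormalForm x) :
    HasNormalForm (σ₁⁻¹ * x) := by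
  have e : σ₁⁻¹ * x = σ₂ * (σ₁ * (halfTwist ^ (-1 : ℤ) * x)) := by
    rw [halfTwist]
    group
  exact e ▸ (h.halfTwist_zpow_mul _).σ₁_mul.σ₂_mul

lemma HasNormalForm.σ₂_inv_mul {x : BraidGroup 3} (h : HasNormalForm x) :
    HasNormalForm (σ₂⁻¹ * x) := by
  have e : σ₂⁻¹ * x = σ₁ * (σ₂ * (halfTwist ^ (-1 : ℤ) * x)) := by
    rw [halfTwist, braid_relation]
    group
  exact e ▸ (h.halfTwist_zpow_mul _).σ₂_mul.σ₁_mul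

lemma hasNormalForm (x : BraidGroup 3) : HasNormalForm x := by
  have hgen (i : Fin (3 - 1)) : PresentedGroup.of (rels := braidRels 3) i = σ₁ ∨
      PresentedGroup.of (rels := braidRels 3) i = σ₂ := by
    fin_cases i
    exacts [Or.inl rfl, Or.inr rfl]
  have hx : x ∈ Subgroup.closure (Set.range (PresentedGroup.of (rels := braidRels 3))) := by
    rw [PresentedGroup.closure_range_of]
    trivial
  induction hx using Subgroup.closure_induction_left with
  | one => exact ⟨0, 0, [], by simp [alternatingWord]⟩
  | mul_left _ hg _ _ ih =>
    obtain ⟨i, rfl⟩ := hg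
    rcases hgen i with h | h <;> rw [h]
    exacts [ih.σ₁_mul, ih.σ₂_mul]
  | inv_mul_cancel _ hg _ _ ih =>
    obtain ⟨i, rfl⟩ := hg
    rcases hgen i with h | h <;> rw [h]
    exacts [ih.σ₁_inv_mul, ih.σ₂_inv_mul]

/-- The letters act on the vector `(1, 1)` by adding one coordinate to the other. -/
lemma rowSums_braidToSL_alternatingWord (l : List Bool) :
    1 ≤ ((braidToSL (alternatingWord l)).val *ᵥ 1) 0 ∧
    1 ≤ ((braidToSL (alternatingWord l)).val *ᵥ 1) 1 ∧
    (l.length : ℤ) + 2 ≤ ∑ i, ((braidToSL (alternatingWord l)).val *ᵥ 1) i := by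
  induction l with
  | nil => simp [alternatingWord]
  | cons c l ih =>
    have hcons : alternatingWord (c :: l) = (if c then σ₁ else σ₂⁻¹) * alternatingWord l := by
      simp [alternatingWord]
    rw [hcons, map_mul, Matrix.SpecialLinearGroup.coe_mul, ← Matrix.mulVec_mulVec]
    generalize (braidToSL (alternatingWord l)).val *ᵥ 1 = r at ih ⊢
    cases c <;>
      simp [coe_braidToSL_σ₁, coe_braidToSL_σ₂, Matrix.SpecialLinearGroup.coe_inv,
        Matrix.adjugate_fin_two, Matrix.mulVec, dotProduct] at ih ⊢ <;> omega

lemma braidToSL_halfTwist_sq : braidToSL halfTwist ^ 2 = -1 := by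
  ext i j
  fin_cases i <;> fin_cases j <;> simp [sq, coe_braidToSL_halfTwist]

lemma sum_rowSums_braidToSL_halfTwist_zpow_le (k : ℤ) :
    ∑ i, ((braidToSL halfTwist ^ k).val *ᵥ 1) i ≤ 2 := by
  have hmod : braidToSL halfTwist ^ k = braidToSL halfTwist ^ (k % 4) := by
    nth_rw 1 [← Int.emod_add_mul_ediv k 4]
    rw [zpow_add, zpow_mul, show (4 : ℤ) = 2 * 2 by rfl, zpow_mul]
    norm_cast
    simp [braidToSL_halfTwist_sq]
  have h0 := Int.emod_nonneg k (show (4 : ℤ) ≠ 0 by decide)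
  have h4 := Int.emod_lt_of_pos k (show (0 : ℤ) < 4 by decide)
  rw [hmod]
  interval_cases k % 4 <;> decide

lemma expSumHom_halfTwist_zpow (k : ℤ) :
    expSumHom (halfTwist ^ k) = Multiplicative.ofAdd (3 * k) := by
  simp [halfTwist, σ₁, σ₂, braidGen, expSumHom, ← ofAdd_add, ← ofAdd_zsmul, mul_comm]

lemma eq_one_of_braidToPSL_of_expSumHom {x : BraidGroup 3} (h : braidToPSL x = 1)
    (he : expSumHom x = 1) : x = 1 := by
  obtain ⟨m, n, l, rfl⟩ := hasNormalForm x
  have hword : ∃ k : ℤ, braidToSL (alternatingWord l) = braidToSL halfTwist ^ k := by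
    rw [braidToPSL, MonoidHom.comp_apply, toPSL_eq_one_iff, map_mul, map_mul, map_zpow, map_zpow]
      at h
    rcases h with h | h
    · refine ⟨-m - n, ?_⟩
      rw [zpow_sub, zpow_neg, eq_mul_inv_iff_mul_eq, eq_inv_iff_mul_eq_one, mul_eq_one_comm,
        ← mul_assoc, h]
    · refine ⟨-m + 2 - n, ?_⟩
      rw [zpow_sub, zpow_add, zpow_neg, eq_mul_inv_iff_mul_eq, eq_inv_mul_iff_mul_eq, ← mul_assoc,
        h, ← braidToSL_halfTwist_sq]
      norm_cast
  obtain ⟨k, hk⟩ := hword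
  have hlen := (rowSums_braidToSL_alternatingWord l).2.2
  rw [hk] at hlen
  have hl : l = [] := List.length_eq_zero_iff.1 <| by
    have := sum_rowSums_braidToSL_halfTwist_zpow_le k
    omega
  rw [hl, alternatingWord, List.map_nil, List.prod_nil, mul_one, ← zpow_add] at he ⊢
  rw [expSumHom_halfTwist_zpow, ofAdd_eq_one] at he
  rw [show m + n = 0 by omega, zpow_zero]

lemma eq_of_braidToPSL_of_expSumHom {x y : BraidGroup 3} (h : braidToPSL x = braidToPSL y)
    (he : expSumHom x = expSumHom y) : x = y := by
  rw [← mul_inv_eq_one]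
  apply eq_one_of_braidToPSL_of_expSumHom <;> rw [map_mul, map_inv, mul_inv_eq_one] <;> assumption

lemma commute_braidToSL_iff {x y : BraidGroup 3} :
    Commute (braidToSL x) (braidToSL y) ↔ Commute x y := by
  refine ⟨fun h => eq_of_braidToPSL_of_expSumHom ?_ ?_, fun h => h.map braidToSL⟩
  · rw [braidToPSL, MonoidHom.comp_apply, map_mul, h.eq, ← map_mul, MonoidHom.comp_apply]
  · rw [map_mul, map_mul, mul_comm]

/-! ### Hurwitz orbits -/

section HurwitzAction

variable {G : Type*} [Group G] {n : ℕ}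

lemma hurwitzAct_one (s : Fin n → G) : hurwitzAct 1 s = s := by
  simp [hurwitzAct]

lemma hurwitzAct_mul (v w : FreeGroup (Fin (n - 1))) (s : Fin n → G) :
    hurwitzAct (v * w) s = hurwitzAct w (hurwitzAct v s) := by
  simp [hurwitzAct]

lemma hurwitzAct_of (i : Fin (n - 1)) (s : Fin n → G) :
    hurwitzAct (FreeGroup.of i) s = hEquiv i s := by
  simp [hurwitzAct]

lemma hurwitzAct_inv_of (i : Fin (n - 1)) (s : Fin n → G) :
    hurwitzAct (FreeGroup.of i)⁻¹ s = (hEquiv i).symm s := by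
  simp [hurwitzAct]

lemma self_mem_hurwitzOrbit (s : Fin n → G) : s ∈ hurwitzOrbit s := ⟨1, hurwitzAct_one s⟩

lemma hEquiv_mem_hurwitzOrbit {s t : Fin n → G} (ht : t ∈ hurwitzOrbit s) (i : Fin (n - 1)) :
    hEquiv i t ∈ hurwitzOrbit s := by
  obtain ⟨w, rfl⟩ := ht
  exact ⟨w * FreeGroup.of i, by rw [hurwitzAct_mul, hurwitzAct_of]⟩

lemma hurwitzAct_mem_of_finite {S : Set (Fin n → G)} (hS : S.Finite)
    (h : ∀ i, Set.MapsTo (hEquiv i) S S) (w : FreeGroup (Fin (n - 1))) {t : Fin n → G}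
    (ht : t ∈ S) : hurwitzAct w t ∈ S := by
  induction w using FreeGroup.induction_on generalizing t with
  | C1 => rwa [hurwitzAct_one]
  | of i => exact hurwitzAct_of i t ▸ h i ht
  | inv_of i _ =>
    have := hS.to_subtype
    exact hurwitzAct_inv_of i t ▸ Equiv.Perm.perm_symm_mapsTo_of_mapsTo _ (h i) ht
  | mul u v hu hv => exact hurwitzAct_mul u v t ▸ hv (hu ht)

/-- On a finite orbit the inverse moves are iterates of the moves themselves. -/
lemma forall_mem_hurwitzOrbit_of_hEquiv {s t₀ : Fin n → G} (hfin : (hurwitzOrbit s).Finite)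
    {P : (Fin n → G) → Prop} (hP : ∀ i t, P t → P (hEquiv i t)) (ht₀ : t₀ ∈ hurwitzOrbit s)
    (h₀ : P t₀) : ∀ t ∈ hurwitzOrbit s, P t := by
  rintro _ ⟨v, rfl⟩
  obtain ⟨w, rfl⟩ := ht₀
  have hmem := hurwitzAct_mem_of_finite (hfin.subset (Set.sep_subset _ P))
    (fun i t ht => ⟨hEquiv_mem_hurwitzOrbit ht.1 i, hP i t ht.2⟩) (w⁻¹ * v) ⟨⟨w, rfl⟩, h₀⟩
  rw [← hurwitzAct_mul, mul_inv_cancel_left] at hmem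
  exact hmem.2

lemma map_hEquiv_apply {A : Type*} [CommGroup A] (f : G →* A) (i : Fin (n - 1)) (t : Fin n → G)
    (k : Fin n) : f (hEquiv i t k) =
      f (t (Equiv.swap ⟨i.val, by omega⟩ ⟨i.val + 1, by omega⟩ k)) := by
  simp only [hEquiv, Equiv.coe_fn_mk, Equiv.swap_apply_def, Fin.ext_iff]
  split_ifs with h
  · rfl
  · simp
  · rfl

lemma exists_perm_of_mem_hurwitzOrbit {A : Type*} [CommGroup A] (f : G →* A) {s : Fin n → G}
    (hfin : (hurwitzOrbit s).Finite) :
    ∀ t ∈ hurwitzOrbit s, ∃ π : Equiv.Perm (Fin n), f ∘ t = f ∘ s ∘ π := by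
  refine forall_mem_hurwitzOrbit_of_hEquiv hfin ?_ (self_mem_hurwitzOrbit s) ⟨1, rfl⟩
  rintro i t ⟨π, hπ⟩
  refine ⟨π * Equiv.swap ⟨i.val, by omega⟩ ⟨i.val + 1, by omega⟩, funext fun k => ?_⟩
  exact (map_hEquiv_apply f i t k).trans (congrFun hπ _)

end HurwitzAction

section Moves

variable {α β : Type*} [Mul α] [Inv α] [Mul β] [Inv β]

/-- The Hurwitz move at the first position of a triple. Only a product and an inverse operation are
required, so that moves can be computed in models of groups that consist of words. -/
def move₁ (t : α × α × α) : α × α × α := (t.2.1, t.2.1⁻¹ * t.1 * t.2.1, t.2.2)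

/-- The Hurwitz move at the second position of a triple. -/
def move₂ (t : α × α × α) : α × α × α := (t.1, t.2.2, t.2.2⁻¹ * t.2.1 * t.2.2)

/-- A set of triples that is stable under the two Hurwitz moves. -/
structure IsMoveClosed (O : Set (α × α × α)) : Prop where
  mapsTo_move₁ : Set.MapsTo move₁ O O
  mapsTo_move₂ : Set.MapsTo move₂ O O

/-- The map induced on triples. -/
def mapTriple (f : α → β) : α × α × α → β × β × β := Prod.map f (Prod.map f f)

lemma IsMoveClosed.image {O : Set (α × α × α)} (hO : IsMoveClosed O) {f : α → β}
    (hmul : ∀ x y, f (x * y) = f x * f y) (hinv : ∀ x, f x⁻¹ = (f x)⁻¹) :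
    IsMoveClosed (mapTriple f '' O) := by
  constructor
  · rintro _ ⟨t, ht, rfl⟩
    exact ⟨move₁ t, hO.mapsTo_move₁ ht, by simp [mapTriple, move₁, hmul, hinv]⟩
  · rintro _ ⟨t, ht, rfl⟩
    exact ⟨move₂ t, hO.mapsTo_move₂ ht, by simp [mapTriple, move₂, hmul, hinv]⟩

/-- The triple lies in a set of at most `n` triples that is stable under the Hurwitz moves. -/
def HasOrbitOfCardLE (n : ℕ∞) (t : α × α × α) : Prop :=
  ∃ O : Set (α × α × α), IsMoveClosed O ∧ t ∈ O ∧ O.encard ≤ n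

lemma HasOrbitOfCardLE.map {n : ℕ∞} {t : α × α × α} (h : HasOrbitOfCardLE n t) {f : α → β}
    (hmul : ∀ x y, f (x * y) = f x * f y) (hinv : ∀ x, f x⁻¹ = (f x)⁻¹) :
    HasOrbitOfCardLE n (mapTriple f t) := by
  obtain ⟨O, hO, ht, hcard⟩ := h
  exact ⟨_, hO.image hmul hinv, Set.mem_image_of_mem _ ht, (Set.encard_image_le _ _).trans hcard⟩

/-- One step of the breadth-first enumeration of an orbit. -/
def addMoves [DecidableEq α] (F : Finset (α × α × α)) : Finset (α × α × α) :=
  F ∪ F.image move₁ ∪ F.image move₂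

lemma hasOrbitOfCardLE_of_addMoves_subset [DecidableEq α] {n : ℕ} {t : α × α × α}
    {F : Finset (α × α × α)} (h : t ∈ F ∧ addMoves F ⊆ F ∧ F.card ≤ n) :
    HasOrbitOfCardLE n t := by
  obtain ⟨ht, hF, hcard⟩ := h
  refine ⟨F, ⟨fun u hu => hF ?_, fun u hu => hF ?_⟩, ht, ?_⟩
  · exact Finset.mem_union_left _ (Finset.mem_union_right _ (Finset.mem_image_of_mem _ hu))
  · exact Finset.mem_union_right _ (Finset.mem_image_of_mem _ hu)
  · rw [Set.encard_coe_eq_coe_finsetCard]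
    exact_mod_cast hcard

end Moves

section Triples

variable {G H : Type*} [Group G] [Group H]

/-- A system of length three as a triple. -/
def toTriple {α : Type*} (t : Fin 3 → α) : α × α × α := (t 0, t 1, t 2)

lemma toTriple_injective {α : Type*} : Function.Injective (toTriple (α := α)) := by
  intro t u h
  simp only [toTriple, Prod.mk.injEq] at h
  ext k
  fin_cases k
  exacts [h.1, h.2.1, h.2.2]

lemma toTriple_hEquiv_mem {O : Set (G × G × G)} (hO : IsMoveClosed O) {t : Fin 3 → G}
    (ht : toTriple t ∈ O) (i : Fin (3 - 1)) : toTriple (hEquiv i t) ∈ O := by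
  fin_cases i
  · exact hO.mapsTo_move₁ ht
  · exact hO.mapsTo_move₂ ht

lemma isMoveClosed_toTriple_hurwitzOrbit (s : Fin 3 → G) :
    IsMoveClosed (toTriple '' hurwitzOrbit s) := by
  constructor
  · rintro _ ⟨t, ht, rfl⟩
    exact ⟨_, hEquiv_mem_hurwitzOrbit ht 0, rfl⟩
  · rintro _ ⟨t, ht, rfl⟩
    exact ⟨_, hEquiv_mem_hurwitzOrbit ht 1, rfl⟩

lemma toTriple_mem_of_mem_hurwitzOrbit {s t₀ : Fin 3 → G} (hfin : (hurwitzOrbit s).Finite)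
    (f : G →* H) {O : Set (H × H × H)} (hO : IsMoveClosed O) (ht₀ : t₀ ∈ hurwitzOrbit s)
    (h₀ : toTriple (f ∘ t₀) ∈ O) : ∀ t ∈ hurwitzOrbit s, toTriple (f ∘ t) ∈ O := by
  refine forall_mem_hurwitzOrbit_of_hEquiv hfin (fun i t ht => ?_) ht₀ h₀
  have hcomp : f ∘ hEquiv i t = hEquiv i (f ∘ t) := by
    ext k
    simp only [hEquiv, Equiv.coe_fn_mk, Function.comp_apply]
    split_ifs <;> simp
  exact hcomp ▸ toTriple_hEquiv_mem hO ht i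

lemma conj_pow_succ (x a : G) (n : ℕ) :
    (x ^ (n + 1))⁻¹ * a * x ^ (n + 1) = (x ^ n)⁻¹ * (x⁻¹ * a * x) * x ^ n := by
  rw [pow_succ']
  group

namespace IsMoveClosed

variable {O : Set (G × G × G)} {a b c x : G}

lemma move₁_mem (hO : IsMoveClosed O) (h : (a, b, c) ∈ O) : (b, b⁻¹ * a * b, c) ∈ O :=
  hO.mapsTo_move₁ h

lemma move₂_mem (hO : IsMoveClosed O) (h : (a, b, c) ∈ O) : (a, c, c⁻¹ * b * c) ∈ O :=
  hO.mapsTo_move₂ h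

lemma inv_move₁_mem (hO : IsMoveClosed O) (hfin : O.Finite) (h : (a, b, c) ∈ O) :
    (a * b * a⁻¹, a, c) ∈ O := by
  have hinj : Set.InjOn move₁ O := by
    rintro ⟨a, b, c⟩ - ⟨a', b', c'⟩ - he
    simp only [move₁, Prod.mk.injEq] at he
    obtain ⟨rfl, he, rfl⟩ := he
    simpa using he
  obtain ⟨⟨a', b', c'⟩, hu, he⟩ :=
    ((hfin.injOn_iff_bijOn_of_mapsTo hO.mapsTo_move₁).1 hinj).surjOn h
  simp only [move₁, Prod.mk.injEq] at he
  obtain ⟨rfl, rfl, rfl⟩ := he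
  simpa [mul_assoc] using hu

lemma rotate_mem (hO : IsMoveClosed O) (h : (a, b, c) ∈ O) (hx : a * b * c = x) :
    (b, c, x⁻¹ * a * x) ∈ O := by
  rw [← hx]
  convert hO.move₂_mem (hO.move₁_mem h) using 3
  group

lemma conj_pow_mem_of_mul_eq (hO : IsMoveClosed O) (h : (a, b, c) ∈ O) (hx : a * b = x) (n : ℕ) :
    ((x ^ n)⁻¹ * a * x ^ n, (x ^ n)⁻¹ * b * x ^ n, c) ∈ O := by
  induction n generalizing a b with
  | zero => simpa using h
  | succ n ih =>
    have hconj : (x⁻¹ * a * x, x⁻¹ * b * x, c) ∈ O := by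
      rw [← hx]
      convert hO.move₁_mem (hO.move₁_mem h) using 2
      · group
      · congr 1
        group
    simpa only [conj_pow_succ] using ih hconj (by rw [← hx]; group)

lemma conj_pow_mem_of_mul_mul_eq (hO : IsMoveClosed O) (h : (a, b, c) ∈ O) (hx : a * b * c = x)
    (n : ℕ) : ((x ^ n)⁻¹ * a * x ^ n, (x ^ n)⁻¹ * b * x ^ n, (x ^ n)⁻¹ * c * x ^ n) ∈ O := by
  induction n generalizing a b c with
  | zero => simpa using h
  | succ n ih =>
    have hconj : (x⁻¹ * a * x, x⁻¹ * b * x, x⁻¹ * c * x) ∈ O :=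
      hO.rotate_mem (hO.rotate_mem (hO.rotate_mem h hx) (by rw [← hx]; group)) (by rw [← hx]; group)
    simpa only [conj_pow_succ] using ih hconj (by rw [← hx]; group)

end IsMoveClosed

lemma exists_commute_pow_of_finite {S : Set G} (hS : S.Finite) {x a : G}
    (h : ∀ n : ℕ, (x ^ n)⁻¹ * a * x ^ n ∈ S) : ∃ k ≠ 0, Commute (x ^ k) a := by
  obtain ⟨m, n, hmn, he⟩ := hS.exists_lt_map_eq_of_forall_mem h
  obtain ⟨k, rfl⟩ := Nat.exists_eq_add_of_lt hmn
  refine ⟨k + 1, k.succ_ne_zero, ?_⟩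
  calc x ^ (k + 1) * a = x ^ (m + k + 1) * ((x ^ m)⁻¹ * a * x ^ m) * (x ^ m)⁻¹ := by
        rw [add_assoc, add_comm m, pow_add]; group
    _ = x ^ (m + k + 1) * ((x ^ (m + k + 1))⁻¹ * a * x ^ (m + k + 1)) * (x ^ m)⁻¹ := by rw [he]
    _ = a * x ^ (k + 1) := by rw [add_assoc, add_comm m, pow_add]; group

end Triples

section Elliptic

variable {R : Type*} [CommRing R] [LinearOrder R] [IsStrictOrderedRing R]

namespace IsMoveClosed

variable {O : Set (SL(2, R) × SL(2, R) × SL(2, R))} {A B C : SL(2, R)}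

lemma abs_tr_mul_lt_two (hO : IsMoveClosed O) (hfin : O.Finite) (h : (A, B, C) ∈ O)
    (hAB : ¬Commute A B) : |tr (A * B)| < 2 := by
  by_contra! htr
  obtain ⟨k, hk, hcomm⟩ := exists_commute_pow_of_finite (hfin.image Prod.fst) fun n =>
    Set.mem_image_of_mem Prod.fst (hO.conj_pow_mem_of_mul_eq h rfl n)
  exact hAB (commute_mul_left_iff.1 (commute_of_commute_pow htr hk hcomm))

lemma commute_mul_mul_left (hO : IsMoveClosed O) (hfin : O.Finite) (h : (A, B, C) ∈ O)
    (htr : 2 ≤ |tr (A * B * C)|) : Commute (A * B * C) A := by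
  obtain ⟨k, hk, hcomm⟩ := exists_commute_pow_of_finite (hfin.image Prod.fst) fun n =>
    Set.mem_image_of_mem Prod.fst (hO.conj_pow_mem_of_mul_mul_eq h rfl n)
  exact commute_of_commute_pow htr hk hcomm

lemma commute_mul_mul_middle (hO : IsMoveClosed O) (hfin : O.Finite) (h : (A, B, C) ∈ O)
    (htr : 2 ≤ |tr (A * B * C)|) : Commute (A * B * C) B := by
  have hcyc : B * C * ((A * B * C)⁻¹ * A * (A * B * C)) = A * B * C := by group
  have hB := hO.commute_mul_mul_left hfin (hO.rotate_mem h rfl) (by rwa [hcyc])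
  rwa [hcyc] at hB

lemma abs_tr_lt_two_or_commTrace_eq_two (hO : IsMoveClosed O) (hfin : O.Finite)
    (h : (A, B, C) ∈ O) : |tr (A * B)| < 2 ∨ commTrace (tr A) (tr B) (tr (A * B)) = 2 := by
  by_cases hAB : Commute A B
  · exact Or.inr (commTrace_of_commute hAB)
  · exact Or.inl (hO.abs_tr_mul_lt_two hfin h hAB)

end IsMoveClosed

end Elliptic

/-! ### A sign character of `SL(2, ℤ)` -/

section Parity

/-- The sign of the permutation of the vectors of `𝔽₂²` induced by a matrix, that is, the sign
character of `SL(2, 𝔽₂) ≃ S₃`. -/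
def parityModTwo : SL(2, ZMod 2) →* ℤˣ :=
  Equiv.Perm.sign.comp ((MulAction.toPermHom ((Fin 2 → ZMod 2) ≃ₗ[ZMod 2] (Fin 2 → ZMod 2))
    (Fin 2 → ZMod 2)).comp Matrix.SpecialLinearGroup.toLin')

/-- The sign of the reduction modulo two of an integral matrix. On elliptic matrices it tells the
ones of trace `0` from the ones of trace `±1`. -/
def parity : SL(2, ℤ) →* ℤˣ :=
  parityModTwo.comp (Matrix.SpecialLinearGroup.map (Int.castRingHom (ZMod 2)))

lemma parity_conj (X Y : SL(2, ℤ)) : parity (Y⁻¹ * X * Y) = parity X := by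
  rw [map_mul, map_mul, map_inv, mul_right_comm, inv_mul_cancel, one_mul]

lemma parity_conj' (X Y : SL(2, ℤ)) : parity (Y * X * Y⁻¹) = parity X := by
  rw [map_mul, map_mul, map_inv, mul_right_comm, mul_inv_cancel, one_mul]

lemma parityModTwo_of_tr_eq_one : ∀ X : SL(2, ZMod 2), tr X = 1 → parityModTwo X = 1 := by
  decide +kernel

lemma eq_one_or_parityModTwo : ∀ X : SL(2, ZMod 2), tr X = 0 → X = 1 ∨ parityModTwo X = -1 := by
  decide +kernel

lemma parity_of_odd_tr {X : SL(2, ℤ)} (h : Odd (tr X)) : parity X = 1 := by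
  refine parityModTwo_of_tr_eq_one _ ?_
  rw [← ZMod.intCast_eq_one_iff_odd.2 h]
  simp [tr_eq_add]

lemma parity_of_tr_eq_zero {X : SL(2, ℤ)} (h : tr X = 0) : parity X = -1 := by
  refine (eq_one_or_parityModTwo _ ?_).resolve_left fun hX => ?_
  · simpa [tr_eq_add] using congrArg (Int.cast : ℤ → ZMod 2) h
  have h00 := congr($hX 0 0)
  have h01 := congr($hX 0 1)
  have h10 := congr($hX 1 0)
  simp only [Matrix.SpecialLinearGroup.map_apply_coe, RingHom.mapMatrix_apply, Matrix.map_apply,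
    Int.coe_castRingHom, Matrix.SpecialLinearGroup.coe_one, Matrix.one_apply_eq, ne_eq,
    Fin.isValue, zero_ne_one, one_ne_zero, not_false_eq_true, Matrix.one_apply_ne,
    ZMod.intCast_eq_one_iff_odd, ZMod.intCast_eq_zero_iff_even] at h00 h01 h10
  obtain ⟨a, ha⟩ := h00
  obtain ⟨b, hb⟩ := h01
  obtain ⟨c, hc⟩ := h10
  have hmod : 4 * (a * a + a + b * c) = -2 := by
    have hdet := entries_det_eq_one X
    rw [eq_neg_of_add_eq_zero_right ((tr_eq_add X).symm.trans h), ha, hb, hc] at hdet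
    linear_combination -hdet
  omega

lemma tr_eq_zero_of_parity {X : SL(2, ℤ)} (h : |tr X| < 2) (hX : parity X = -1) : tr X = 0 := by
  by_contra h0
  have hodd : Odd (tr X) := by
    rw [abs_lt] at h
    rw [Int.odd_iff]
    omega
  simp [parity_of_odd_tr hodd] at hX

lemma isUnit_tr_of_parity {X : SL(2, ℤ)} (h : |tr X| < 2) (hX : parity X = 1) :
    IsUnit (tr X) := by
  have h0 : tr X ≠ 0 := fun h0 => by simp [parity_of_tr_eq_zero h0] at hX
  rw [Int.isUnit_iff_abs_eq]
  have := abs_pos.2 h0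
  omega

end Parity

/-! ### Some pair commutes -/

section NoCommutingPair

lemma commTrace_le_two_of_abs_lt_two {p q x : ℤ} (hp : |p| < 2) (hq : |q| < 2) (hx : |x| < 2) :
    commTrace p q x ≤ 2 := by
  have hcheck : ∀ p ∈ Finset.Ioo (-2 : ℤ) 2, ∀ q ∈ Finset.Ioo (-2 : ℤ) 2,
      ∀ x ∈ Finset.Ioo (-2 : ℤ) 2, commTrace p q x ≤ 2 := by decide +kernel
  simp only [abs_lt, ← Finset.mem_Ioo] at hp hq hx
  exact hcheck p hp q hq x hx

lemma abs_le_six_of_abs_mul_add_mul_le {p q r t : ℤ} (ht : |t| < 2) (hr : 2 ≤ |r|)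
    (hp : |q * r + p * t| ≤ 3) (hq : |p * r + q * t| ≤ 3) : |p| ≤ 6 ∧ |q| ≤ 6 := by
  have hsub : |q - p| ≤ |(q - p) * (r - t)| := by
    rw [abs_mul]
    exact le_mul_of_one_le_right (abs_nonneg _) (Int.one_le_abs (by grind))
  have hadd : |q + p| ≤ |(q + p) * (r + t)| := by
    rw [abs_mul]
    exact le_mul_of_one_le_right (abs_nonneg _) (Int.one_le_abs (by grind))
  rw [show (q - p) * (r - t) = (q * r + p * t) - (p * r + q * t) by ring] at hsub
  rw [show (q + p) * (r + t) = (q * r + p * t) + (p * r + q * t) by ring] at hadd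
  grind

lemma abs_add_add_mul_le_three {x x' y z : ℤ} (hx : IsUnit x) (hx' : IsUnit x') (hy : IsUnit y)
    (hz : IsUnit z) : |x + x' + y * z| ≤ 3 := by
  have hyz := hy.mul hz
  rw [Int.isUnit_iff_abs_eq] at hx hx' hyz
  exact (abs_add_three x x' (y * z)).trans (by rw [hx, hx', hyz]; norm_num)

/-- Left-hand side of the relation `tr_fricke`. -/
def fricke (p q r t x y z : ℤ) : ℤ :=
  x * y * z + x ^ 2 + y ^ 2 + z ^ 2 - (p * q + r * t) * x - (q * r + p * t) * y
    - (p * r + q * t) * z + p ^ 2 + q ^ 2 + r ^ 2 + t ^ 2 + p * q * r * t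

lemma fricke_ne_four_of_mem_Icc : ∀ t ∈ Finset.Ioo (-2 : ℤ) 2, ∀ p ∈ Finset.Icc (-6 : ℤ) 6,
    ∀ q ∈ Finset.Icc (-6 : ℤ) 6, ∀ r ∈ Finset.Icc (-6 : ℤ) 6,
    (p * q + r * t).natAbs ≤ 3 → (q * r + p * t).natAbs ≤ 3 ∧ (p * r + q * t).natAbs ≤ 3 →
    ∀ x ∈ ({1, -1} : Finset ℤ), ∀ y ∈ ({1, -1} : Finset ℤ), ∀ z ∈ ({1, -1} : Finset ℤ),
    2 < commTrace p q x ∧ 2 < commTrace q r y ∧ 2 < commTrace p r z →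
    (p * q + r * t - y * z - x).natAbs = 1 ∧ (q * r + p * t - x * z - y).natAbs = 1 ∧
      (p * r + q * t - x * y - z).natAbs = 1 → fricke p q r t x y z ≠ 4 := by
  decide +kernel

lemma fricke_ne_four_of_isUnit {p q r t x y z : ℤ} (ht : |t| < 2) (hx : IsUnit x) (hy : IsUnit y)
    (hz : IsUnit z) (hx' : IsUnit (p * q + r * t - y * z - x))
    (hy' : IsUnit (q * r + p * t - x * z - y)) (hz' : IsUnit (p * r + q * t - x * y - z))
    (hpq : 2 < commTrace p q x) (hqr : 2 < commTrace q r y) (hpr : 2 < commTrace p r z) :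
    fricke p q r t x y z ≠ 4 := by
  have hbig {a b c : ℤ} (hc : IsUnit c) (h : 2 < commTrace a b c) : 2 ≤ |a| ∨ 2 ≤ |b| := by
    by_contra! hab
    rw [Int.isUnit_iff_abs_eq] at hc
    exact h.not_ge (commTrace_le_two_of_abs_lt_two hab.1 hab.2 (by omega))
  have hsum_x : |p * q + r * t| ≤ 3 := by
    convert abs_add_add_mul_le_three hx hx' hy hz using 2
    ring
  have hsum_y : |q * r + p * t| ≤ 3 := by
    convert abs_add_add_mul_le_three hy hy' hx hz using 2
    ring
  have hsum_z : |p * r + q * t| ≤ 3 := by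
    convert abs_add_add_mul_le_three hz hz' hx hy using 2
    ring
  have hp := @abs_le_six_of_abs_mul_add_mul_le q r p t ht
  have hq := @abs_le_six_of_abs_mul_add_mul_le p r q t ht
  have hr := @abs_le_six_of_abs_mul_add_mul_le p q r t ht
  obtain ⟨hp, hq, hr⟩ : |p| ≤ 6 ∧ |q| ≤ 6 ∧ |r| ≤ 6 := by
    rw [mul_comm r p, mul_comm q p] at hp
    rw [mul_comm r q] at hq
    rcases hbig hx hpq with h | h
    · have hqr' := hp h hsum_z hsum_x
      rcases hbig hy hqr with h' | h'
      · exact ⟨(hq h' hsum_y hsum_x).1, hqr'⟩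
      · exact ⟨(hr h' hsum_y hsum_z).1, hqr'⟩
    · have hpr' := hq h hsum_y hsum_x
      rcases hbig hz hpr with h' | h'
      · exact ⟨hpr'.1, hp h' hsum_z hsum_x⟩
      · exact ⟨hpr'.1, (hr h' hsum_y hsum_z).2, hpr'.2⟩
  have hmem {c : ℤ} (hc : IsUnit c) : c ∈ ({1, -1} : Finset ℤ) := by simpa [Int.isUnit_iff] using hc
  simp only [abs_le (b := (6 : ℤ)), abs_lt, ← Finset.mem_Icc, ← Finset.mem_Ioo] at hp hq hr ht
  rw [Int.isUnit_iff_natAbs_eq] at hx' hy' hz'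
  rw [Int.abs_eq_natAbs] at hsum_x hsum_y hsum_z
  exact fricke_ne_four_of_mem_Icc t ht p hp q hq r hr (by omega) (by omega)
    x (hmem hx) y (hmem hy) z (hmem hz) ⟨hpq, hqr, hpr⟩ ⟨hx', hy', hz'⟩

lemma fricke_ne_four_of_eq_zero {p q r t z : ℤ} (ht : |t| < 2) (hz : IsUnit z)
    (hx' : p * q + r * t = 0) (hy' : q * r + p * t = 0) (hz' : IsUnit (p * r + q * t - z))
    (hpq : 2 < commTrace p q 0) (hqr : 2 < commTrace q r 0) (hpr : 2 < commTrace p r z) :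
    fricke p q r t 0 0 z ≠ 4 := by
  intro hF
  simp only [commTrace, fricke] at *
  have hz2 := Int.isUnit_mul_self hz
  rcases eq_or_ne t 0 with rfl | ht0
  · have hpq0 : p * q = 0 := by simpa using hx'
    have hqr0 : q * r = 0 := by simpa using hy'
    rcases eq_or_ne q 0 with rfl | hq
    · linarith
    · rw [(mul_eq_zero.1 hpq0).resolve_right hq] at hpq hF
      rw [(mul_eq_zero.1 hqr0).resolve_left hq] at hF
      linarith
  have ht1 : IsUnit t := by
    rw [Int.isUnit_iff_abs_eq]
    grind
  have ht2 := Int.isUnit_mul_self ht1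
  have hr : r = -(p * q * t) := by linear_combination t * hx' - r * ht2
  have hp : p * (q ^ 2 - 1) = 0 := by
    rw [hr] at hy'
    linear_combination (-t) * hy' + (-p * q ^ 2 + p) * ht2
  rcases mul_eq_zero.1 hp with rfl | hq
  · have hq : q ^ 2 - q * (t * z) = 2 := by
      subst hr
      linear_combination hF - hz2 - ht2
    rcases Int.isUnit_iff.1 (ht1.mul hz) with h | h <;> rw [h] at hq <;> nlinarith
  · have hqtz : (p ^ 2 - 1) * (1 + q * t * z) = 0 := by
      rw [hr] at hF
      linear_combination hF - hz2 - ht2 - hq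
    have hz_eq : z = -(q * t) := by
      have h := (mul_eq_zero.1 hqtz).resolve_left (by linarith)
      linear_combination (q * t) * h - z * (q ^ 2 * ht2 + hq)
    have hz'_eq : p * r + q * t - z = q * t * (2 - p ^ 2) := by
      rw [hr, hz_eq]
      ring
    rcases Int.isUnit_iff.1 (isUnit_of_mul_isUnit_right (hz'_eq ▸ hz')) with h | h <;> linarith

end NoCommutingPair

section NoCommutingPair

lemma abs_tr_eq_of_mul_mem_center {R : Type*} [CommRing R] [LinearOrder R] [IsStrictOrderedRing R]
    {X Y : SL(2, R)} (h : X * Y ∈ Subgroup.center SL(2, R)) : |tr X| = |tr Y| := by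
  rcases mem_center_iff_eq_one_or_eq_neg_one.1 h with h | h
  · rw [eq_inv_of_mul_eq_one_left h, tr_inv]
  · rw [show X = -Y⁻¹ by rw [eq_mul_inv_of_mul_eq h, neg_one_mul], tr_neg, abs_neg, tr_inv]

namespace IsMoveClosed

variable {O : Set (SL(2, ℤ) × SL(2, ℤ) × SL(2, ℤ))} {A B C : SL(2, ℤ)}

lemma abs_tr_mul_mul_lt_two (hO : IsMoveClosed O) (hfin : O.Finite) (h : (A, B, C) ∈ O)
    (hAB : ¬Commute A B) (hBC : ¬Commute B C) (hAC : ¬Commute A C) : |tr (A * B * C)| < 2 := by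
  by_contra! htr
  have hcenter : A * B * C ∈ Subgroup.center SL(2, ℤ) := by
    by_contra hABC
    exact hAB (commute_trans hABC (hO.commute_mul_mul_left hfin h htr)
      (hO.commute_mul_mul_middle hfin h htr))
  have hA : |tr A| < 2 := by
    rw [abs_tr_eq_of_mul_mem_center (mul_assoc A B C ▸ hcenter)]
    exact hO.abs_tr_mul_lt_two hfin (hO.rotate_mem h rfl) hBC
  have hC : |tr C| < 2 := by
    rw [← abs_tr_eq_of_mul_mem_center hcenter]
    exact hO.abs_tr_mul_lt_two hfin h hAB
  have hAC' := hO.abs_tr_mul_lt_two hfin (hO.move₂_mem h) hAC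
  exact (two_lt_commTrace hAC' hAC).not_ge (commTrace_le_two_of_abs_lt_two hA hC hAC')

lemma notMem_of_parity_eq (hO : IsMoveClosed O) (hfin : O.Finite)
    (hno : ∀ A B C, (A, B, C) ∈ O → ¬Commute A B)
    (hAB : parity A = parity B) (hBC : parity B = parity C) : (A, B, C) ∉ O := by
  intro h
  have elliptic {A B C} (h : (A, B, C) ∈ O) := hO.abs_tr_mul_lt_two hfin h (hno A B C h)
  have rotate {A B C} (h : (A, B, C) ∈ O) := hO.rotate_mem h rfl
  have nAB := hno _ _ _ h
  have nBC := hno _ _ _ (rotate h)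
  have nAC := hno _ _ _ (hO.move₂_mem h)
  have eAB := elliptic h
  have eBC := elliptic (rotate h)
  have eAC := elliptic (hO.move₂_mem h)
  have uAB' : IsUnit (tr (A * (C⁻¹ * B * C))) :=
    isUnit_tr_of_parity (elliptic (hO.move₂_mem (hO.move₂_mem h)))
      (by rw [map_mul, parity_conj, hAB, Int.units_mul_self])
  have uBC' : IsUnit (tr (A * B * A⁻¹ * C)) :=
    isUnit_tr_of_parity (elliptic (hO.move₂_mem (hO.inv_move₁_mem hfin h)))
      (by rw [map_mul, parity_conj', hBC, Int.units_mul_self])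
  have uAC' : IsUnit (tr (B⁻¹ * A * B * C)) :=
    isUnit_tr_of_parity (elliptic (rotate (hO.move₁_mem h)))
      (by rw [map_mul, parity_conj, hAB, hBC, Int.units_mul_self])
  rw [tr_mul_conj_mul] at uAB'
  rw [tr_conj'_mul] at uBC'
  rw [tr_conj_mul] at uAC'
  exact fricke_ne_four_of_isUnit (hO.abs_tr_mul_mul_lt_two hfin h nAB nBC nAC)
    (isUnit_tr_of_parity eAB (by simp [hAB])) (isUnit_tr_of_parity eBC (by simp [hBC]))
    (isUnit_tr_of_parity eAC (by simp [hAB, hBC])) uAB' uBC' uAC' (two_lt_commTrace eAB nAB)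
    (two_lt_commTrace eBC nBC) (two_lt_commTrace eAC nAC) (tr_fricke A B C)

lemma notMem_of_parity_ne (hO : IsMoveClosed O) (hfin : O.Finite)
    (hno : ∀ A B C, (A, B, C) ∈ O → ¬Commute A B)
    (hAB : parity A = -parity B) (hAC : parity A = parity C) : (A, B, C) ∉ O := by
  intro h
  have elliptic {A B C} (h : (A, B, C) ∈ O) := hO.abs_tr_mul_lt_two hfin h (hno A B C h)
  have rotate {A B C} (h : (A, B, C) ∈ O) := hO.rotate_mem h rfl
  have nAB := hno _ _ _ h
  have nBC := hno _ _ _ (rotate h)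
  have nAC := hno _ _ _ (hO.move₂_mem h)
  have eAC := elliptic (hO.move₂_mem h)
  have hBC : parity B = -parity C := by rw [← hAC, hAB, neg_neg]
  have zAB : tr (A * B) = 0 := tr_eq_zero_of_parity (elliptic h) (by simp [hAB])
  have zBC : tr (B * C) = 0 := tr_eq_zero_of_parity (elliptic (rotate h)) (by simp [hBC])
  have zAB' : tr (A * (C⁻¹ * B * C)) = 0 :=
    tr_eq_zero_of_parity (elliptic (hO.move₂_mem (hO.move₂_mem h)))
      (by rw [map_mul, parity_conj, hAB, neg_mul, Int.units_mul_self])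
  have zBC' : tr (A * B * A⁻¹ * C) = 0 :=
    tr_eq_zero_of_parity (elliptic (hO.move₂_mem (hO.inv_move₁_mem hfin h)))
      (by rw [map_mul, parity_conj', hBC, neg_mul, Int.units_mul_self])
  have uAC' : IsUnit (tr (B⁻¹ * A * B * C)) :=
    isUnit_tr_of_parity (elliptic (rotate (hO.move₁_mem h)))
      (by rw [map_mul, parity_conj, hAC, Int.units_mul_self])
  rw [tr_mul_conj_mul, zAB, zBC, zero_mul, sub_zero, sub_zero] at zAB'
  rw [tr_conj'_mul, zAB, zBC, zero_mul, sub_zero, sub_zero] at zBC'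
  rw [tr_conj_mul, zAB, zBC, zero_mul, sub_zero] at uAC'
  refine fricke_ne_four_of_eq_zero (hO.abs_tr_mul_mul_lt_two hfin h nAB nBC nAC)
    (isUnit_tr_of_parity eAC (by simp [hAC])) zAB' zBC' uAC' ?_ ?_ (two_lt_commTrace eAC nAC) ?_
  · simpa [zAB] using two_lt_commTrace (elliptic h) nAB
  · simpa [zBC] using two_lt_commTrace (elliptic (rotate h)) nBC
  · simpa [zAB, zBC, fricke] using tr_fricke A B C

lemma exists_commute (hO : IsMoveClosed O) (hfin : O.Finite) (hne : O.Nonempty) :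
    ∃ A B C, (A, B, C) ∈ O ∧ Commute A B := by
  by_contra! hno
  obtain ⟨⟨A, B, C⟩, h⟩ := hne
  have rotate {A B C} (h : (A, B, C) ∈ O) := hO.rotate_mem h rfl
  have eq_or {u v : ℤˣ} : u = v ∨ u = -v := or_iff_not_imp_left.2 Int.units_ne_iff_eq_neg.1
  rcases eq_or with hAB | hAB <;> rcases eq_or with hAC | hAC
  · exact hO.notMem_of_parity_eq hfin hno hAB (hAB ▸ hAC) h
  · exact hO.notMem_of_parity_ne hfin hno (hAB ▸ hAC) (by rw [parity_conj, hAB]) (rotate h)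
  · exact hO.notMem_of_parity_ne hfin hno hAB hAC h
  · exact hO.notMem_of_parity_ne hfin hno (by rw [parity_conj, hAC, neg_neg])
      (by rw [parity_conj, ← neg_inj, ← hAB, hAC]) (rotate (rotate h))

end IsMoveClosed

end NoCommutingPair

/-! ### Traces of a triple with a commuting pair -/

section CommutingTraces

/-- Relations between the traces `p`, `q`, `r`, `u`, `v`, `t`, `w`, `x` of `A`, `B`, `C`, `AC`,
`BC`, `ABC`, `AB⁻¹`, `AC⁻¹BC`, where `(A, B, C)` belongs to a finite move-closed set, `A` and `B`
commute, and `A` and `C⁻¹BC` do not. The last field is about the trace of `AD⁻¹CD`, where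
`D = C⁻¹BC`, since `(A, D, D⁻¹CD)` belongs to the same set. -/
structure CommutingTraces (p q r u v t w x : ℤ) : Prop where
  two_mul_t : 2 * t = p * v + q * u - w * r
  w_eq : w = x + u * v - r * t
  commTrace_w : commTrace p q w = 2
  sq_eq_four_iff : p ^ 2 = 4 ↔ q ^ 2 = 4
  two_lt_commTrace_x : 2 < commTrace p q x
  elliptic_or : |p * r + q * t - x * v - u| < 2 ∨ commTrace p r (p * r + q * t - x * v - u) = 2

namespace CommutingTraces

variable {p q r u v t w x : ℤ}

lemma eq_of_t_eq_zero (h : CommutingTraces p q r u v 0 w x) (hu : IsUnit u) (hv : IsUnit v)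
    (hx : IsUnit x) : w = 2 * (u * v) ∧ q = u * v * p ∧ r = u * p := by
  obtain ⟨ht, hw, hpqw, -, -, -⟩ := h
  simp only [commTrace] at hpqw
  have v2 := Int.isUnit_mul_self hv
  have huv : (u * v) * (u * v) = 1 := Int.isUnit_mul_self (hu.mul hv)
  rcases Int.isUnit_eq_or_eq_neg hx (hu.mul hv) with rfl | rfl
  · obtain rfl : w = 2 * (u * v) := by linarith
    have hq : (q - u * v * p) ^ 2 = 0 := by linear_combination hpqw + (p ^ 2 - 4) * huv
    obtain rfl : q = u * v * p := sub_eq_zero.1 (pow_eq_zero_iff two_ne_zero |>.1 hq)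
    refine ⟨rfl, rfl, ?_⟩
    have hr : 2 * (r - u * p) = 0 := by
      linear_combination (u * v) * ht - 2 * r * huv + p * u * v2 + p * u * huv
    linarith
  · obtain rfl : w = 0 := by linarith
    have hp : p = -(u * v * q) := by linear_combination (-v) * ht - p * v2
    have hq : q * q = 2 := by
      rw [hp] at hpqw
      have h2 : 2 * (q * q) = 4 := by linear_combination hpqw - q ^ 2 * huv
      linarith
    exact absurd ⟨q, hq.symm⟩ (by decide +kernel : ¬IsSquare (2 : ℤ))

lemma not_sq_eq_four_iff {e : ℤ} (he : IsUnit e) (h : p ^ 2 + q ^ 2 + e * (p * q) = 3)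
    (hlt : 3 < p ^ 2 + q ^ 2 - e * (p * q)) : ¬(p ^ 2 = 4 ↔ q ^ 2 = 4) := by
  have e2 := Int.isUnit_mul_self he
  have hp : |p| ≤ 2 := abs_le_of_sq_le_sq (by nlinarith [sq_nonneg (2 * q + e * p)]) zero_le_two
  have hq : |q| ≤ 2 := abs_le_of_sq_le_sq (by nlinarith [sq_nonneg (2 * p + e * q)]) zero_le_two
  have hcheck : ∀ p ∈ Finset.Icc (-2 : ℤ) 2, ∀ q ∈ Finset.Icc (-2 : ℤ) 2,
      ∀ e ∈ ({1, -1} : Finset ℤ), p ^ 2 + q ^ 2 + e * (p * q) = 3 →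
      3 < p ^ 2 + q ^ 2 - e * (p * q) → ¬(p ^ 2 = 4 ↔ q ^ 2 = 4) := by decide +kernel
  simp only [abs_le, ← Finset.mem_Icc] at hp hq
  exact hcheck p hp q hq e (by simpa [Int.isUnit_iff] using he) h hlt

lemma isUnit_r (h : CommutingTraces p q r 0 0 t w x) (ht : IsUnit t) : IsUnit r := by
  obtain ⟨htw, hw, hpqw, hpq, hx, -⟩ := h
  simp only [commTrace] at hpqw hx
  have t2 := Int.isUnit_mul_self ht
  have hwr : w * r = -2 * t := by linarith
  have hr : |r| ≤ 2 := Int.le_of_dvd two_pos ((abs_dvd r 2).2 ⟨-(w * t), by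
    linear_combination (-2) * t2 + t * hwr⟩)
  have hr0 : r ≠ 0 := by
    rintro rfl
    have := Int.isUnit_iff.1 ht
    omega
  have hr2 (s : ℤ) (hs : IsUnit s) : r ≠ 2 * s := by
    rintro rfl
    have s2 := Int.isUnit_mul_self hs
    have hst := Int.isUnit_mul_self (hs.mul ht)
    obtain rfl : w = -(s * t) := by
      have : 2 * (w + s * t) = 0 := by linear_combination s * hwr - 2 * w * s2
      linarith
    obtain rfl : x = s * t := by linarith
    exact not_sq_eq_four_iff (hs.mul ht) (by linarith) (by linarith) hpq
  have h2 := hr2 1 isUnit_one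
  have h2' := hr2 (-1) isUnit_one.neg
  rw [abs_le] at hr
  rw [Int.isUnit_iff]
  omega

lemma eq_of_u_v_eq_zero (h : CommutingTraces p q r 0 0 t w x) (ht : IsUnit t) :
    w = -2 * (r * t) ∧ q = -(r * t * p) := by
  have r2 := Int.isUnit_mul_self (h.isUnit_r ht)
  have rt2 := Int.isUnit_mul_self ((h.isUnit_r ht).mul ht)
  obtain ⟨htw, -, hpqw, -⟩ := h
  obtain rfl : w = -2 * (r * t) := by linear_combination r * htw - w * r2
  have hq : (q + r * t * p) ^ 2 = 0 := by
    simp only [commTrace] at hpqw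
    linear_combination hpqw + (p ^ 2 - 4) * rt2
  exact ⟨rfl, eq_neg_of_add_eq_zero_left (pow_eq_zero_iff two_ne_zero |>.1 hq)⟩

lemma eq_of_v_x_eq_zero (h : CommutingTraces p q r u 0 t w 0) (ht : IsUnit t) (hu : IsUnit u) :
    p = u * r ∧ q = u * t * (2 - r ^ 2) ∧ w = -(r * t) := by
  obtain ⟨htw, hw, hpqw, -, -, hell⟩ := h
  have t2 := Int.isUnit_mul_self ht
  have u2 := Int.isUnit_mul_self hu
  obtain rfl : w = -(r * t) := by linarith
  obtain rfl : q = u * t * (2 - r ^ 2) := by linear_combination (-u) * htw - q * u2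
  refine ⟨?_, rfl, rfl⟩
  simp only [commTrace] at hpqw hell
  have hfac : (p - u * r) * (p - u * r * (r ^ 2 - 3)) = 0 := by
    linear_combination hpqw - ((2 - r ^ 2) ^ 2 * t ^ 2 - r ^ 2 * (r ^ 2 - 3)) * u2
      - ((2 - r ^ 2) ^ 2 + r ^ 2 + p * u * (2 - r ^ 2) * r) * t2
  rcases mul_eq_zero.1 hfac with hp | hp
  · linarith
  obtain rfl : p = u * r * (r ^ 2 - 3) := by linarith
  rw [show u * r * (r ^ 2 - 3) * r + u * t * (2 - r ^ 2) * t - 0 * 0 - u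
      = u * (r ^ 4 - 4 * r ^ 2 + 1) by linear_combination u * (2 - r ^ 2) * t2] at hell
  rcases hell with hell | hell
  · rw [abs_mul, Int.isUnit_iff_abs_eq.1 hu, one_mul, abs_lt] at hell
    have hr : |r| ≤ 2 := abs_le_of_sq_le_sq (by nlinarith) zero_le_two
    rw [abs_le] at hr
    obtain ⟨hr₁, hr₂⟩ := hr
    interval_cases r <;> simp at hell ⊢
  · have hr : (2 * r ^ 2 - 5) * (2 * r ^ 2 - 5) = 13 := by
      linear_combination (-4) * hell + (4 * (r ^ 2 * (r ^ 2 - 3) ^ 2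
        + (r ^ 4 - 4 * r ^ 2 + 1) ^ 2 - r ^ 2 * (r ^ 2 - 3) * (r ^ 4 - 4 * r ^ 2 + 1))) * u2
    exact absurd ⟨_, hr.symm⟩ (by decide +kernel : ¬IsSquare (13 : ℤ))

lemma false_of_v_isUnit (h : CommutingTraces p q r 0 v 0 w 0) (hv : IsUnit v) : False := by
  obtain ⟨ht, hw, hpqw, hpq, -⟩ := h
  obtain rfl : w = 0 := by linarith
  obtain rfl : p = 0 := by linear_combination (-v) * ht - p * Int.isUnit_mul_self hv
  simp only [commTrace] at hpqw
  simpa using hpq.2 (by linarith)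

lemma x_ne_w (h : CommutingTraces p q r u v t w x) : x ≠ w := by
  rintro rfl
  exact h.two_lt_commTrace_x.ne' h.commTrace_w

lemma mem_of_isSquare_discriminant : ∀ w ∈ Finset.Icc (-38 : ℤ) 34, ∀ e ∈ ({1, -1} : Finset ℤ),
    w + 2 ∣ 36 → IsSquare ((w ^ 2 - 4) * ((2 + w * (e + 1 - w)) ^ 2 - 4 * (w + 2))) →
    w ∈ ({-1, 0, 1, 2, 4} : Finset ℤ) := by
  decide +kernel

lemma sq_mul_sub_eq (h : commTrace p q w = 2) :
    ((w + 2) * (p - q)) ^ 2 = (w ^ 2 - 4) * ((p + q) ^ 2 - 4 * (w + 2)) := by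
  simp only [commTrace] at h
  linear_combination 4 * (w + 2) * h

lemma mem_of_add_eq {e : ℤ} (he : IsUnit e) (hs : p + q = 2 + w * (e + 1 - w))
    (h : commTrace p q w = 2) : w ∈ ({-1, 0, 1, 2, 4} : Finset ℤ) := by
  have hdvd : w + 2 ∣ 36 := by
    refine ⟨(5 - 4 * e) * (p * q - w + 2 - (e + 3 - w) * (w * (e + 1 - w) - 2 - 2 * e)), ?_⟩
    rw [commTrace] at h
    linear_combination (44 + 16 * e) * Int.isUnit_mul_self he
      + (5 - 4 * e) * (h - (p + q + 2 + w * (e + 1 - w)) * hs)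
  have hle := abs_le.1 (Int.le_of_dvd (by norm_num) ((abs_dvd _ _).2 hdvd))
  refine mem_of_isSquare_discriminant w (Finset.mem_Icc.2 (by omega)) e
    (by simpa [Int.isUnit_iff] using he) hdvd ⟨(w + 2) * (p - q), ?_⟩
  rw [← hs, ← sq_mul_sub_eq h, sq]

lemma not_sq_eq_four_iff_or_isUnit {e : ℤ} (he : IsUnit e) (hs : p + q = 2 + w * (e + 1 - w))
    (h : commTrace p q w = 2) : ¬(p ^ 2 = 4 ↔ q ^ 2 = 4) ∨ IsUnit p ∧ IsUnit q := by
  have hcheck : ∀ w ∈ ({-1, 0, 1, 2, 4} : Finset ℤ), ∀ p ∈ Finset.Icc (-11 : ℤ) 11,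
      ∀ q ∈ Finset.Icc (-11 : ℤ) 11, ∀ e ∈ ({1, -1} : Finset ℤ), p + q = 2 + w * (e + 1 - w) →
      commTrace p q w = 2 → ¬(p ^ 2 = 4 ↔ q ^ 2 = 4) ∨ IsUnit p ∧ IsUnit q := by decide +kernel
  have hw := mem_of_add_eq he hs h
  have hdisc := sq_mul_sub_eq h
  have he' : e ∈ ({1, -1} : Finset ℤ) := by simpa [Int.isUnit_iff] using he
  have hbound : (p - q) ^ 2 ≤ 8 ^ 2 ∧ |p + q| ≤ 14 := by
    rw [hs] at hdisc ⊢
    simp only [Finset.mem_insert, Finset.mem_singleton] at hw he'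
    rcases hw with rfl | rfl | rfl | rfl | rfl <;> rcases he' with rfl | rfl <;>
      norm_num at hdisc ⊢ <;> nlinarith
  have hsub := abs_le.1 (abs_le_of_sq_le_sq hbound.1 (by norm_num))
  have hadd := abs_le.1 hbound.2
  exact hcheck w hw p (Finset.mem_Icc.2 (by omega)) q (Finset.mem_Icc.2 (by omega)) e he' hs h

lemma false_of_isUnit (h : CommutingTraces p q r u v t w x) (hu : IsUnit u) (hv : IsUnit v)
    (ht : IsUnit t) (hx : IsUnit x) : False := by
  obtain ⟨htw, hw, hpqw, hpq, hpqx, -⟩ := h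
  have u2 := Int.isUnit_mul_self hu
  have v2 := Int.isUnit_mul_self hv
  have t2 := Int.isUnit_mul_self ht
  have uv2 := Int.isUnit_mul_self (hu.mul hv)
  have hr : r = t * (x + u * v - w) := by linear_combination t * hw - r * t2
  have hsum : t * p * v + t * q * u = 2 + u * v * w * (u * v * x + 1 - u * v * w) := by
    rw [hr] at htw
    linear_combination (-t) * htw + (w * (x + u * v - w) + 2) * t2 - w * (x - w) * uv2
  have hcomm : commTrace (t * p * v) (t * q * u) (u * v * w) = 2 := by
    simp only [commTrace] at hpqw ⊢
    linear_combination hpqw + p ^ 2 * (t ^ 2 * v2 + t2) + q ^ 2 * (t ^ 2 * u2 + t2) + w ^ 2 * uv2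
      - p * q * w * (t ^ 2 * uv2 + t2)
  have hP : (t * p * v) ^ 2 = p ^ 2 := by linear_combination p ^ 2 * (t ^ 2 * v2 + t2)
  have hQ : (t * q * u) ^ 2 = q ^ 2 := by linear_combination q ^ 2 * (t ^ 2 * u2 + t2)
  rcases not_sq_eq_four_iff_or_isUnit ((hu.mul hv).mul hx) hsum hcomm with hne | ⟨hp, hq⟩
  · rw [hP, hQ] at hne
    exact hne hpq
  · replace hp :=
      Int.isUnit_iff_abs_eq.1 (isUnit_of_mul_isUnit_right (isUnit_of_mul_isUnit_left hp))
    replace hq :=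
      Int.isUnit_iff_abs_eq.1 (isUnit_of_mul_isUnit_right (isUnit_of_mul_isUnit_left hq))
    rw [Int.isUnit_iff_abs_eq] at hx
    exact hpqx.not_ge (commTrace_le_two_of_abs_lt_two (by omega) (by omega) (by omega))

end CommutingTraces

end CommutingTraces

/-! ### Four triples with small orbits -/

/-- Words in `S` and `U` subject to `S² = U³ = 1`. The letters `0`, `1` and `2` stand for `S`, `U`
and `U⁻¹`, so that negation of letters is inversion. -/
structure ModularWord where
  /-- The letters of the word. -/
  letters : List (Fin 3)
deriving DecidableEq

namespace ModularWord

/-- Multiplication by a letter on the left, followed by the cancellation at the front. -/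
def consLetter (i : Fin 3) : List (Fin 3) → List (Fin 3)
  | [] => [i]
  | j :: w =>
    if i + j = 0 then w else if i = j then -i :: w else i :: j :: w

instance : Mul ModularWord := ⟨fun v w => ⟨v.letters.foldr consLetter w.letters⟩⟩

instance : Inv ModularWord := ⟨fun w => ⟨(w.letters.map fun i => -i).reverse⟩⟩

variable {G : Type*} [Group G] {S U : G}

/-- The value of a list of letters in a group. -/
def letterProd (S U : G) (w : List (Fin 3)) : G := (w.map ![S, U, U⁻¹]).prod

/-- The value of a word in a group. -/
def eval (S U : G) (w : ModularWord) : G := letterProd S U w.letters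

lemma letterProd_cons (i : Fin 3) (w : List (Fin 3)) :
    letterProd S U (i :: w) = ![S, U, U⁻¹] i * letterProd S U w := by
  rw [letterProd, List.map_cons, List.prod_cons, letterProd]

lemma letterProd_consLetter (hS : S * S = 1) (hU : U * U * U = 1) (i : Fin 3)
    (w : List (Fin 3)) :
    letterProd S U (consLetter i w) = ![S, U, U⁻¹] i * letterProd S U w := by
  have hUU : U * U = U⁻¹ := eq_inv_of_mul_eq_one_left hU
  have hUU' : U⁻¹ * U⁻¹ = U := by rw [← mul_inv_rev, hUU, inv_inv]
  rcases w with - | ⟨j, w⟩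
  · exact letterProd_cons i []
  · rw [letterProd_cons, ← mul_assoc]
    fin_cases i <;> fin_cases j <;>
      simp [consLetter, letterProd_cons, ← mul_assoc, hS, hUU, hUU', Fin.neg_def, Fin.add_def]

lemma eval_mul (hS : S * S = 1) (hU : U * U * U = 1) (v w : ModularWord) :
    eval S U (v * w) = eval S U v * eval S U w := by
  obtain ⟨v⟩ := v
  change letterProd S U (v.foldr consLetter w.letters) = letterProd S U v * letterProd S U w.letters
  induction v with
  | nil => exact (one_mul _).symm
  | cons i v ih =>
    rw [List.foldr_cons, letterProd_consLetter hS hU, ih, letterProd_cons, mul_assoc]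

lemma eval_inv (hS : S * S = 1) (w : ModularWord) : eval S U w⁻¹ = (eval S U w)⁻¹ := by
  have hneg : ∀ i, ![S, U, U⁻¹] (-i) = (![S, U, U⁻¹] i)⁻¹ := by
    intro i
    fin_cases i
    exacts [eq_inv_of_mul_eq_one_left hS, rfl, (inv_inv U).symm]
  obtain ⟨w⟩ := w
  change letterProd S U (w.map fun i => -i).reverse = (letterProd S U w)⁻¹
  simp [letterProd, List.prod_inv_reverse, List.map_reverse, Function.comp_def, hneg]

lemma hasOrbitOfCardLE_eval (hS : S * S = 1) (hU : U * U * U = 1) {n : ℕ∞}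
    {t : ModularWord × ModularWord × ModularWord} (h : HasOrbitOfCardLE n t) :
    HasOrbitOfCardLE n (mapTriple (eval S U) t) :=
  h.map (eval_mul hS hU) (eval_inv hS)

end ModularWord

section FreeProduct

variable {G : Type*} [Group G] {a c : G}

-- With `S = a²c` and `U = ac` one has `a = SU⁻¹` and `c = USU`.
lemma mul_mul_mul_eq_of_mul_self_eq_one (hS : a * a * c * (a * a * c) = 1) :
    a * c * (a * a * c) * (a * c) = c := by
  calc a * c * (a * a * c) * (a * c) = a⁻¹ * (a * a * c * (a * a * c)) * (a * c) := by group
    _ = c := by rw [hS]; group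

lemma hasOrbitOfCardLE_eight (hS : a * a * c * (a * a * c) = 1)
    (hU : a * c * (a * c) * (a * c) = 1) : HasOrbitOfCardLE 8 (a, a, c) := by
  let t : ModularWord × ModularWord × ModularWord := (⟨[0, 2]⟩, ⟨[0, 2]⟩, ⟨[1, 0, 1]⟩)
  have horbit : HasOrbitOfCardLE (8 : ℕ) t :=
    hasOrbitOfCardLE_of_addMoves_subset (F := addMoves^[4] {t}) (by decide +kernel)
  have hc := mul_mul_mul_eq_of_mul_self_eq_one hS
  simp only [mul_assoc] at hc
  simpa [t, mapTriple, ModularWord.eval, ModularWord.letterProd, mul_assoc, hc] using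
    ModularWord.hasOrbitOfCardLE_eval hS hU horbit

lemma hasOrbitOfCardLE_twentySeven (hS : a * a * c * (a * a * c) = 1)
    (hU : a * c * (a * c) * (a * c) = 1) : HasOrbitOfCardLE 27 (a, a * a, c) := by
  let t : ModularWord × ModularWord × ModularWord := (⟨[0, 2]⟩, ⟨[0, 2, 0, 2]⟩, ⟨[1, 0, 1]⟩)
  have horbit : HasOrbitOfCardLE (27 : ℕ) t :=
    hasOrbitOfCardLE_of_addMoves_subset (F := addMoves^[10] {t}) (by decide +kernel)
  have hc := mul_mul_mul_eq_of_mul_self_eq_one hS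
  simp only [mul_assoc] at hc
  simpa [t, mapTriple, ModularWord.eval, ModularWord.letterProd, mul_assoc, hc] using
    ModularWord.hasOrbitOfCardLE_eval hS hU horbit

lemma hasOrbitOfCardLE_eighteen (hS : a * c * (a * c) = 1) (hU : c * c * c = 1) :
    HasOrbitOfCardLE 18 (a, a, c) := by
  let t : ModularWord × ModularWord × ModularWord := (⟨[0, 2]⟩, ⟨[0, 2]⟩, ⟨[1]⟩)
  have horbit : HasOrbitOfCardLE (18 : ℕ) t :=
    hasOrbitOfCardLE_of_addMoves_subset (F := addMoves^[8] {t}) (by decide +kernel)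
  simpa [t, mapTriple, ModularWord.eval, ModularWord.letterProd, mul_assoc] using
    ModularWord.hasOrbitOfCardLE_eval hS hU horbit

end FreeProduct

section Dihedral

/-- The action of `ℤ` on a commutative group through inversion. -/
def inversionAction (N : Type*) [CommGroup N] : Multiplicative ℤ →* MulAut N :=
  zpowersHom _ (MulEquiv.inv N)

/-- The group generated by `a`, `b` and `c` subject to `ab = ba`, `cac⁻¹ = a⁻¹`, `cbc⁻¹ = b⁻¹`. -/
abbrev DihedralModel : Type :=
  (Multiplicative ℤ × Multiplicative ℤ) ⋊[inversionAction _] Multiplicative ℤ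

instance : DecidableEq DihedralModel :=
  fun _ _ => decidable_of_iff _ SemidirectProduct.ext_iff.symm

variable {G : Type*} [Group G]

lemma map_inversionAction {N : Type*} [CommGroup N] (f : N →* G) {c : G}
    (h : ∀ x, c * f x * c⁻¹ = (f x)⁻¹) (n : Multiplicative ℤ) (x : N) :
    f (inversionAction N n x) = MulAut.conj (zpowersHom G c n) (f x) := by
  have hconj : ∀ x, MulAut.conj c (f x) = f x⁻¹ := fun x => (h x).trans (map_inv f x).symm
  have hconj' : ∀ x, (MulAut.conj c)⁻¹ (f x) = f x⁻¹ := fun x => by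
    rw [MulAut.inv_apply, MulEquiv.symm_apply_eq, hconj, inv_inv]
  simp only [inversionAction, zpowersHom_apply, map_zpow]
  induction n.toAdd generalizing x with
  | zero => rfl
  | succ k ih => simp only [zpow_add_one, MulAut.mul_apply, hconj, ← ih]; rfl
  | pred k ih => simp only [zpow_sub_one, MulAut.mul_apply, hconj', ← ih]; rfl

/-- The homomorphism `(i, j) ↦ aⁱbʲ` given by two commuting elements. -/
def zpowersHom₂ {a b : G} (hab : Commute a b) : Multiplicative ℤ × Multiplicative ℤ →* G :=
  (zpowersHom G a).noncommCoprod (zpowersHom G b) fun m n => by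
    simpa only [zpowersHom_apply] using hab.zpow_zpow m.toAdd n.toAdd

lemma conj_zpowersHom₂ {a b c : G} (hab : Commute a b) (hca : c * a * c⁻¹ = a⁻¹)
    (hcb : c * b * c⁻¹ = b⁻¹) (x : Multiplicative ℤ × Multiplicative ℤ) :
    c * zpowersHom₂ hab x * c⁻¹ = (zpowersHom₂ hab x)⁻¹ := by
  simp only [zpowersHom₂, MonoidHom.noncommCoprod_apply, zpowersHom_apply, mul_inv_rev]
  rw [← MulAut.conj_apply, map_mul, map_zpow, map_zpow, MulAut.conj_apply, MulAut.conj_apply,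
    hca, hcb, inv_zpow, inv_zpow, (hab.zpow_zpow _ _).inv_inv.eq]

/-- The homomorphism out of the model given by three elements that satisfy its relations. -/
def DihedralModel.lift {a b c : G} (hab : Commute a b) (hca : c * a * c⁻¹ = a⁻¹)
    (hcb : c * b * c⁻¹ = b⁻¹) : DihedralModel →* G :=
  SemidirectProduct.lift (zpowersHom₂ hab) (zpowersHom G c) fun n => MonoidHom.ext fun x =>
    map_inversionAction _ (conj_zpowersHom₂ hab hca hcb) n x

lemma hasOrbitOfCardLE_twentyFour {a b c : G} (hab : Commute a b) (hca : c * a * c⁻¹ = a⁻¹)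
    (hcb : c * b * c⁻¹ = b⁻¹) : HasOrbitOfCardLE 24 (a, b, c) := by
  let t : DihedralModel × DihedralModel × DihedralModel :=
    (.inl (.ofAdd 1, 1), .inl (1, .ofAdd 1), .inr (.ofAdd 1))
  have horbit : HasOrbitOfCardLE (24 : ℕ) t :=
    hasOrbitOfCardLE_of_addMoves_subset (F := addMoves^[8] {t}) (by decide +kernel)
  simpa [mapTriple, t, DihedralModel.lift, zpowersHom₂] using
    horbit.map (map_mul (DihedralModel.lift hab hca hcb)) (map_inv (DihedralModel.lift hab hca hcb))

end Dihedral

/-! ### The image in `PSL(2, ℤ)` of a triple with a commuting pair -/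

lemma HasOrbitOfCardLE.mono {α : Type*} [Mul α] [Inv α] {m n : ℕ∞} {t : α × α × α}
    (h : HasOrbitOfCardLE m t) (hmn : m ≤ n) : HasOrbitOfCardLE n t := by
  obtain ⟨O, hO, ht, hcard⟩ := h
  exact ⟨O, hO, ht, hcard.trans hmn⟩

section Projective

lemma toPSL_mul_self {R : Type*} [CommRing R] {X : SL(2, R)} (h : tr X = 0) :
    toPSL X * toPSL X = 1 := by
  have hX : X * X = -1 := by
    ext1
    simpa [h] using congrFun₂ (coe_mul_self X) _ _
  rw [← map_mul, hX, toPSL_neg, map_one]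

lemma toPSL_mul_self_mul_self {X : SL(2, ℤ)} (h : IsUnit (tr X)) :
    toPSL X * toPSL X * toPSL X = 1 := by
  have hsq := Int.isUnit_mul_self h
  have hX : (X * X * X : Matrix (Fin 2) (Fin 2) ℤ) = -tr X • 1 := by
    rw [coe_mul_self, sub_mul, smul_mul_assoc, coe_mul_self, smul_sub, smul_smul, hsq]
    simp
  rw [← map_mul, ← map_mul, toPSL_eq_one_iff]
  rcases Int.isUnit_iff.1 h with htr | htr
  · exact Or.inr (Subtype.ext (by simpa [htr] using hX))
  · exact Or.inl (Subtype.ext (by simpa [htr] using hX))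

lemma toPSL_eq_of_tr_eq {E X Y : SL(2, ℤ)} {e : ℤ} (he : IsUnit e) (hE : |tr E| < 2)
    (ht : tr X = e * tr Y) (hEX : tr (E * X) = e * tr (E * Y)) (hXY : tr (X * Y⁻¹) = 2 * e) :
    toPSL X = toPSL Y := by
  rcases Int.isUnit_iff.1 he with rfl | rfl
  · rw [eq_of_tr_eq hE (by linarith) (by linarith) hXY]
  · have hneg : X = -Y := eq_of_tr_eq hE (by rw [tr_neg]; linarith)
      (by rw [mul_neg, tr_neg]; linarith) (by rw [inv_neg, mul_neg, tr_neg, hXY]; rfl)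
    rw [hneg, toPSL_neg]

end Projective

lemma mul_mul_inv_eq_inv {G : Type*} [Group G] {a c : G} (h : c⁻¹ * a * c = a⁻¹) :
    c * a * c⁻¹ = a⁻¹ := by
  rw [mul_inv_eq_iff_eq_mul, ← inv_inj, mul_inv_rev, mul_inv_rev, inv_inv, ← h]
  group

lemma hasOrbitOfCardLE_of_commute_conj {R : Type*} [CommRing R] [IsDomain R] {A B C : SL(2, R)}
    (hA : A ∉ Subgroup.center SL(2, R)) (hB : B ∉ Subgroup.center SL(2, R)) (hAB : Commute A B)
    (hAC : commTrace (tr A) (tr C) (tr (A * C)) ≠ 2)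
    (hBC : commTrace (tr B) (tr C) (tr (B * C)) ≠ 2) (hconj : Commute A (C⁻¹ * B * C)) :
    HasOrbitOfCardLE 24 (A, B, C) := by
  have hinvB : C⁻¹ * B * C = B⁻¹ := conj_eq_inv_of_commute hBC (commute_trans hA hconj hAB)
  have hinvA : C⁻¹ * A * C = A⁻¹ := by
    refine conj_eq_inv_of_commute hAC (commute_trans hB ?_ hAB.symm)
    have hconj' := (hAB.map (MulAut.conj C⁻¹)).symm
    rwa [MulAut.conj_apply, MulAut.conj_apply, inv_inv, hinvB, Commute.inv_left_iff] at hconj'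
  exact hasOrbitOfCardLE_twentyFour hAB (mul_mul_inv_eq_inv hinvA) (mul_mul_inv_eq_inv hinvB)

/-- What is known about the traces of a triple `(A, B, C)` in a finite move-closed set when `A` and
`B` commute but `A` and `C⁻¹BC` do not. -/
structure IsRigidTriple (A B C : SL(2, ℤ)) : Prop where
  commute : Commute A B
  traces : CommutingTraces (tr A) (tr B) (tr C) (tr (A * C)) (tr (B * C)) (tr (A * B * C))
    (tr (A * B⁻¹)) (tr (A * (C⁻¹ * B * C)))
  abs_tr_left : |tr (A * C)| < 2
  abs_tr_right : |tr (B * C)| < 2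
  abs_tr_mul : |tr (A * B * C)| < 2
  abs_tr_conj : |tr (A * (C⁻¹ * B * C))| < 2

namespace IsRigidTriple

variable {A B C : SL(2, ℤ)}

lemma hasOrbitOfCardLE_of_parity_neg_pos_neg (h : IsRigidTriple A B C) (hA : parity A = -1)
    (hB : parity B = 1) (hC : parity C = -1) :
    HasOrbitOfCardLE 27 (toPSL A, toPSL B, toPSL C) := by
  have hu := isUnit_tr_of_parity h.abs_tr_left (by simp [hA, hC])
  have ht := isUnit_tr_of_parity h.abs_tr_mul (by simp [hA, hB, hC])
  have hn := h.traces
  rw [tr_eq_zero_of_parity h.abs_tr_right (by simp [hB, hC]),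
    tr_eq_zero_of_parity h.abs_tr_conj (by rw [map_mul, parity_conj]; simp [hA, hB])] at hn
  obtain ⟨hp, hq, hw⟩ := hn.eq_of_v_x_eq_zero ht hu
  have u2 := Int.isUnit_mul_self hu
  have t2 := Int.isUnit_mul_self ht
  have hAAC : tr (A * A * C) = 0 := by
    rw [tr_mul_self_mul]
    linear_combination tr (A * C) * hp + tr C * u2
  have hACB : tr (A * C * B) = tr (A * B * C) := by
    rw [tr_mul_comm, ← mul_assoc, h.commute.eq]
  have hAAB : toPSL (A * A) = toPSL B := by
    refine toPSL_eq_of_tr_eq (E := A * C) (hu.mul ht).neg h.abs_tr_left ?_ ?_ ?_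
    · rw [tr_mul_self]
      linear_combination (tr A + tr (A * C) * tr C) * hp + tr (A * C) * tr (A * B * C) * hq +
        tr C ^ 2 * u2 + (2 - tr C ^ 2) * (tr (A * B * C) ^ 2 * u2 + t2)
    · rw [tr_mul_comm, tr_mul_self_mul, ← mul_assoc, hAAC, hACB]
      linear_combination tr (A * C) * t2
    · rw [tr_mul_self_mul, tr_inv, hw]
      linear_combination (-(tr C * tr (A * B * C))) * hp - hq
  rw [← hAAB, map_mul]
  refine hasOrbitOfCardLE_twentySeven ?_ ?_
  · simpa only [map_mul] using toPSL_mul_self hAAC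
  · simpa only [map_mul] using toPSL_mul_self_mul_self hu

lemma hasOrbitOfCardLE_of_parity_neg_neg_pos (h : IsRigidTriple A B C) (hA : parity A = -1)
    (hB : parity B = -1) (hC : parity C = 1) :
    HasOrbitOfCardLE 18 (toPSL A, toPSL B, toPSL C) := by
  have hu := tr_eq_zero_of_parity h.abs_tr_left (by simp [hA, hC])
  have hv := tr_eq_zero_of_parity h.abs_tr_right (by simp [hB, hC])
  have ht := isUnit_tr_of_parity h.abs_tr_mul (by simp [hA, hB, hC])
  have hn := h.traces
  rw [hu, hv] at hn
  have hr := hn.isUnit_r ht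
  obtain ⟨hw, hq⟩ := hn.eq_of_u_v_eq_zero ht
  have hAB : toPSL A = toPSL B := by
    refine toPSL_eq_of_tr_eq (E := C) (hr.mul ht).neg ?_ ?_ ?_ ?_
    · rw [Int.isUnit_iff_abs_eq.1 hr]
      norm_num
    · linear_combination tr C * tr (A * B * C) * hq - tr A * Int.isUnit_mul_self (hr.mul ht)
    · rw [tr_mul_comm C A, tr_mul_comm C B, hu, hv, mul_zero]
    · linear_combination hw
  rw [← hAB]
  refine hasOrbitOfCardLE_eighteen ?_ (toPSL_mul_self_mul_self hr)
  simpa only [map_mul] using toPSL_mul_self hu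

lemma hasOrbitOfCardLE_of_parity_neg_neg_neg (h : IsRigidTriple A B C) (hA : parity A = -1)
    (hB : parity B = -1) (hC : parity C = -1) :
    HasOrbitOfCardLE 8 (toPSL A, toPSL B, toPSL C) := by
  have hu := isUnit_tr_of_parity h.abs_tr_left (by simp [hA, hC])
  have hv := isUnit_tr_of_parity h.abs_tr_right (by simp [hB, hC])
  have hx := isUnit_tr_of_parity h.abs_tr_conj (by rw [map_mul, parity_conj]; simp [hA, hB])
  have ht := tr_eq_zero_of_parity h.abs_tr_mul (by simp [hA, hB, hC])
  have hn := h.traces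
  rw [ht] at hn
  obtain ⟨hw, hq, hr⟩ := hn.eq_of_t_eq_zero hu hv hx
  have hAAC : tr (A * A * C) = 0 := by
    rw [tr_mul_self_mul]
    linear_combination -hr
  have hAB : toPSL A = toPSL B := by
    refine toPSL_eq_of_tr_eq (E := B * C) (hu.mul hv) h.abs_tr_right ?_ ?_ hw
    · linear_combination (-(tr (A * C) * tr (B * C))) * hq - tr A * Int.isUnit_mul_self (hu.mul hv)
    · have hBBC : tr (B * B * C) = 0 := by
        rw [tr_mul_self_mul]
        linear_combination tr (B * C) * hq - hr + tr (A * C) * tr A * Int.isUnit_mul_self hv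
      rw [tr_mul_comm (B * C) A, ← mul_assoc, ht, tr_mul_comm (B * C) B, ← mul_assoc, hBBC,
        mul_zero]
  rw [← hAB]
  refine hasOrbitOfCardLE_eight ?_ ?_
  · simpa only [map_mul] using toPSL_mul_self hAAC
  · simpa only [map_mul] using toPSL_mul_self_mul_self hu

lemma parity_ne_neg_pos_pos (h : IsRigidTriple A B C) (hA : parity A = -1) (hB : parity B = 1) :
    parity C ≠ 1 := by
  intro hC
  have hn := h.traces
  rw [tr_eq_zero_of_parity h.abs_tr_mul (by simp [hA, hB, hC]),
    tr_eq_zero_of_parity h.abs_tr_left (by simp [hA, hC]),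
    tr_eq_zero_of_parity h.abs_tr_conj (by rw [map_mul, parity_conj]; simp [hA, hB])] at hn
  exact hn.false_of_v_isUnit (isUnit_tr_of_parity h.abs_tr_right (by simp [hB, hC]))

lemma parity_ne_pos_pos (h : IsRigidTriple A B C) (hA : parity A = 1) : parity B ≠ 1 := by
  intro hB
  have hx := isUnit_tr_of_parity h.abs_tr_conj (by rw [map_mul, parity_conj]; simp [hA, hB])
  rcases Int.units_eq_one_or (parity C) with hC | hC
  · exact h.traces.false_of_isUnit (isUnit_tr_of_parity h.abs_tr_left (by simp [hA, hC]))
      (isUnit_tr_of_parity h.abs_tr_right (by simp [hB, hC]))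
      (isUnit_tr_of_parity h.abs_tr_mul (by simp [hA, hB, hC])) hx
  · have hn := h.traces
    rw [tr_eq_zero_of_parity h.abs_tr_mul (by simp [hA, hB, hC]),
      tr_eq_zero_of_parity h.abs_tr_left (by simp [hA, hC]),
      tr_eq_zero_of_parity h.abs_tr_right (by simp [hB, hC])] at hn
    exact hn.x_ne_w (by simpa using hn.w_eq.symm)

lemma hasOrbitOfCardLE_of_parity_neg (h : IsRigidTriple A B C) (hA : parity A = -1) :
    HasOrbitOfCardLE 27 (toPSL A, toPSL B, toPSL C) := by
  rcases Int.units_eq_one_or (parity B) with hB | hB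
  · have hC := (Int.units_eq_one_or _).resolve_left (h.parity_ne_neg_pos_pos hA hB)
    exact h.hasOrbitOfCardLE_of_parity_neg_pos_neg hA hB hC
  · rcases Int.units_eq_one_or (parity C) with hC | hC
    · exact (h.hasOrbitOfCardLE_of_parity_neg_neg_pos hA hB hC).mono (by norm_num)
    · exact (h.hasOrbitOfCardLE_of_parity_neg_neg_neg hA hB hC).mono (by norm_num)

end IsRigidTriple

namespace IsMoveClosed

variable {O : Set (SL(2, ℤ) × SL(2, ℤ) × SL(2, ℤ))} {A B C : SL(2, ℤ)}

lemma abs_tr_fst_mul_thd_lt_two (hO : IsMoveClosed O) (hfin : O.Finite) (h : (A, B, C) ∈ O)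
    (hAC : ¬Commute A C) : |tr (A * C)| < 2 :=
  hO.abs_tr_mul_lt_two hfin (hO.move₂_mem h) hAC

lemma abs_tr_snd_mul_thd_lt_two (hO : IsMoveClosed O) (hfin : O.Finite) (h : (A, B, C) ∈ O)
    (hBC : ¬Commute B C) : |tr (B * C)| < 2 :=
  hO.abs_tr_mul_lt_two hfin (hO.rotate_mem h rfl) hBC

lemma abs_tr_mul_mul_lt_two_of_commute (hO : IsMoveClosed O) (hfin : O.Finite) (h : (A, B, C) ∈ O)
    (hAB : Commute A B) (hAC : ¬Commute A C) : |tr (A * B * C)| < 2 := by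
  by_contra! htr
  have hcomm := ((Commute.refl A).mul_right hAB).inv_right.mul_right
    (hO.commute_mul_mul_left hfin h htr).symm
  rw [inv_mul_cancel_left] at hcomm
  exact hAC hcomm

lemma elliptic_or_commTrace_eq_two (hO : IsMoveClosed O) (hfin : O.Finite) (h : (A, B, C) ∈ O) :
    let y := tr A * tr C + tr B * tr (A * B * C) - tr (A * (C⁻¹ * B * C)) * tr (B * C) - tr (A * C)
    |y| < 2 ∨ commTrace (tr A) (tr C) y = 2 := by
  intro y
  set D := C⁻¹ * B * C with hD
  have hy : y = tr (A * (D⁻¹ * C * D)) := by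
    rw [tr_mul_conj_mul, show A * C * D = A * B * C by rw [hD]; group,
      show C * D = B * C by rw [hD]; group, show tr D = tr B from tr_conj B C]
    ring
  have hmem := hO.move₂_mem (hO.move₂_mem (hO.move₂_mem h))
  simpa only [hy, tr_conj] using hO.abs_tr_lt_two_or_commTrace_eq_two hfin hmem

lemma commutingTraces (hO : IsMoveClosed O) (hfin : O.Finite) (h : (A, B, C) ∈ O)
    (hA : A ∉ Subgroup.center SL(2, ℤ)) (hB : B ∉ Subgroup.center SL(2, ℤ)) (hAB : Commute A B)
    (hconj : ¬Commute A (C⁻¹ * B * C)) :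
    CommutingTraces (tr A) (tr B) (tr C) (tr (A * C)) (tr (B * C)) (tr (A * B * C))
      (tr (A * B⁻¹)) (tr (A * (C⁻¹ * B * C))) where
  two_mul_t := by
    have hACB : tr (A * C * B) = tr (A * B * C) := by rw [tr_mul_comm, ← mul_assoc, hAB.eq]
    linear_combination tr_mul_mul_add A B C - hACB + tr C * tr_mul_inv A B
  w_eq := by linear_combination tr_mul_inv A B - tr_mul_conj_mul A B C
  commTrace_w := by simpa only [tr_inv] using commTrace_of_commute hAB.inv_right
  sq_eq_four_iff := tr_sq_eq_four_iff_of_commute hA hB hAB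
  two_lt_commTrace_x := by
    have hlt := hO.abs_tr_fst_mul_thd_lt_two hfin (hO.move₂_mem h) hconj
    simpa only [tr_conj] using two_lt_commTrace hlt hconj
  elliptic_or := hO.elliptic_or_commTrace_eq_two hfin h

lemma isRigidTriple (hO : IsMoveClosed O) (hfin : O.Finite) (h : (A, B, C) ∈ O)
    (hA : A ∉ Subgroup.center SL(2, ℤ)) (hB : B ∉ Subgroup.center SL(2, ℤ)) (hAB : Commute A B)
    (hAC : ¬Commute A C) (hBC : ¬Commute B C) (hconj : ¬Commute A (C⁻¹ * B * C)) :
    IsRigidTriple A B C where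
  commute := hAB
  traces := hO.commutingTraces hfin h hA hB hAB hconj
  abs_tr_left := hO.abs_tr_fst_mul_thd_lt_two hfin h hAC
  abs_tr_right := hO.abs_tr_snd_mul_thd_lt_two hfin h hBC
  abs_tr_mul := hO.abs_tr_mul_mul_lt_two_of_commute hfin h hAB hAC
  abs_tr_conj := hO.abs_tr_fst_mul_thd_lt_two hfin (hO.move₂_mem h) hconj

lemma hasOrbitOfCardLE_or_isRigidTriple (hO : IsMoveClosed O) (hfin : O.Finite)
    (h : (A, B, C) ∈ O) (hA : A ∉ Subgroup.center SL(2, ℤ)) (hB : B ∉ Subgroup.center SL(2, ℤ))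
    (hAB : Commute A B) (hAC : ¬Commute A C) (hBC : ¬Commute B C) :
    HasOrbitOfCardLE 27 (mapTriple toPSL (A, B, C)) ∨ IsRigidTriple A B C := by
  by_cases hconj : Commute A (C⁻¹ * B * C)
  · refine Or.inl (HasOrbitOfCardLE.mono ?_ (by norm_num : (24 : ℕ∞) ≤ 27))
    refine (hasOrbitOfCardLE_of_commute_conj hA hB hAB ?_ ?_ hconj).map (map_mul _) (map_inv _)
    · exact (two_lt_commTrace (hO.abs_tr_fst_mul_thd_lt_two hfin h hAC) hAC).ne'
    · exact (two_lt_commTrace (hO.abs_tr_snd_mul_thd_lt_two hfin h hBC) hBC).ne'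
  · exact Or.inr (hO.isRigidTriple hfin h hA hB hAB hAC hBC hconj)

lemma swap_mem_of_commute (hO : IsMoveClosed O) (h : (A, B, C) ∈ O) (hAB : Commute A B) :
    (B, A, C) ∈ O := by
  simpa [mul_assoc, hAB.eq] using hO.move₁_mem h

lemma exists_hasOrbitOfCardLE (hO : IsMoveClosed O) (hfin : O.Finite) (h : (A, B, C) ∈ O)
    (hA : A ∉ Subgroup.center SL(2, ℤ)) (hB : B ∉ Subgroup.center SL(2, ℤ)) (hAB : Commute A B)
    (hAC : ¬Commute A C) (hBC : ¬Commute B C) :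
    ∃ t ∈ O, HasOrbitOfCardLE 27 (mapTriple toPSL t) := by
  have hswap := hO.swap_mem_of_commute h hAB
  rcases hO.hasOrbitOfCardLE_or_isRigidTriple hfin h hA hB hAB hAC hBC with hcard | hrigid
  · exact ⟨_, h, hcard⟩
  rcases hO.hasOrbitOfCardLE_or_isRigidTriple hfin hswap hB hA hAB.symm hBC hAC with
    hcard | hrigid_swap
  · exact ⟨_, hswap, hcard⟩
  rcases Int.units_eq_one_or (parity A) with hpA | hpA
  · have hpB := (Int.units_eq_one_or _).resolve_left (hrigid.parity_ne_pos_pos hpA)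
    exact ⟨_, hswap, hrigid_swap.hasOrbitOfCardLE_of_parity_neg hpB⟩
  · exact ⟨_, h, hrigid.hasOrbitOfCardLE_of_parity_neg hpA⟩

end IsMoveClosed

/-! ### Irreducible braid systems -/

section Nondegenerate

variable {G : Type*} [Group G]

/-- A triple of group elements none of which is central and which do not all commute: what is left
of irreducibility for the image of a braid system in `SL(2, ℤ)`. -/
structure IsNondegenerate (t : G × G × G) : Prop where
  fst_notMem_center : t.1 ∉ Subgroup.center G
  snd_notMem_center : t.2.1 ∉ Subgroup.center G
  thd_notMem_center : t.2.2 ∉ Subgroup.center G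
  not_commute : ¬(Commute t.1 t.2.1 ∧ Commute t.1 t.2.2 ∧ Commute t.2.1 t.2.2)

lemma conj_mem_center_iff {a b : G} :
    b⁻¹ * a * b ∈ Subgroup.center G ↔ a ∈ Subgroup.center G := by
  rw [Subgroup.Normal.mem_comm_iff inferInstance, mul_inv_cancel_left]

lemma conj_eq_self_of_commute {a b : G} (h : Commute b (b⁻¹ * a * b)) : b⁻¹ * a * b = a := by
  have hb : b⁻¹ * a * b * b = a * b := by rw [← h.eq]; group
  exact mul_right_cancel hb

lemma isMoveClosed_isNondegenerate : IsMoveClosed {t : G × G × G | IsNondegenerate t} := by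
  constructor
  · rintro ⟨a, b, c⟩ ⟨ha, hb, hc, hcomm⟩
    refine ⟨hb, mt conj_mem_center_iff.1 ha, hc, ?_⟩
    rintro ⟨hba, hbc, hac⟩
    simp only [move₁] at hba hbc hac
    have hconj := conj_eq_self_of_commute hba
    rw [hconj] at hba hac
    exact hcomm ⟨hba.symm, hac, hbc⟩
  · rintro ⟨a, b, c⟩ ⟨ha, hb, hc, hcomm⟩
    refine ⟨ha, hc, mt conj_mem_center_iff.1 hb, ?_⟩
    rintro ⟨hac, hab, hcb⟩
    simp only [move₂] at hac hab hcb
    have hconj := conj_eq_self_of_commute hcb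
    rw [hconj] at hab hcb
    exact hcomm ⟨hab, hac, hcb.symm⟩

end Nondegenerate

lemma IsNondegenerate.not_commute_of_commute {R : Type*} [CommRing R] [IsDomain R]
    {A B C : SL(2, R)} (h : IsNondegenerate (A, B, C)) (hAB : Commute A B) :
    ¬Commute A C ∧ ¬Commute B C :=
  ⟨fun hAC => h.not_commute ⟨hAB, hAC, commute_trans h.fst_notMem_center hAB hAC⟩,
    fun hBC => h.not_commute ⟨hAB, commute_trans h.snd_notMem_center hAB.symm hBC, hBC⟩⟩

lemma exists_not_commute_of_not_isReducible {m n : ℕ} [Nontrivial (Fin n)]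
    {s : Fin n → BraidGroup m} (hs : ¬IsReducible s) (i : Fin n) : ∃ j, ¬Commute (s i) (s j) := by
  by_contra! hcomm
  obtain ⟨j, hj⟩ := exists_ne i
  exact hs ⟨{i}, ⟨i, rfl⟩, ⟨j, hj⟩, by rintro _ rfl j -; exact hcomm j⟩

lemma isNondegenerate_of_not_isReducible {s : Fin 3 → BraidGroup 3} (hs : ¬IsReducible s) :
    IsNondegenerate (toTriple (braidToSL ∘ s)) := by
  have hcenter (i : Fin 3) : braidToSL (s i) ∉ Subgroup.center SL(2, ℤ) := by
    obtain ⟨j, hj⟩ := exists_not_commute_of_not_isReducible hs i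
    exact fun hi => hj (commute_braidToSL_iff.1 (Subgroup.mem_center_iff.1 hi _).symm)
  refine ⟨hcenter 0, hcenter 1, hcenter 2, ?_⟩
  rintro ⟨h01, h02, -⟩
  obtain ⟨j, hj⟩ := exists_not_commute_of_not_isReducible hs 0
  refine hj ?_
  fin_cases j
  exacts [Commute.refl _, commute_braidToSL_iff.1 h01, commute_braidToSL_iff.1 h02]

lemma exists_mem_hurwitzOrbit_hasOrbitOfCardLE {s : Fin 3 → BraidGroup 3} (hs : ¬IsReducible s)
    (hfin : (hurwitzOrbit s).Finite) :
    ∃ t ∈ hurwitzOrbit s, HasOrbitOfCardLE 27 (toTriple (braidToPSL ∘ t)) := by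
  have hO := (isMoveClosed_toTriple_hurwitzOrbit s).image (map_mul braidToSL) (map_inv braidToSL)
  have hOfin := (hfin.image toTriple).image (mapTriple braidToSL)
  have hmem_orbit := Set.mem_image_of_mem toTriple (self_mem_hurwitzOrbit s)
  obtain ⟨A, B, C, hmem, hAB⟩ :=
    hO.exists_commute hOfin ⟨_, Set.mem_image_of_mem _ hmem_orbit⟩
  have hABC : IsNondegenerate (A, B, C) := by
    obtain ⟨_, ⟨t, ht, rfl⟩, htABC⟩ := hmem
    exact htABC ▸ toTriple_mem_of_mem_hurwitzOrbit hfin braidToSL isMoveClosed_isNondegenerate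
      (self_mem_hurwitzOrbit s) (isNondegenerate_of_not_isReducible hs) t ht
  obtain ⟨hAC, hBC⟩ := hABC.not_commute_of_commute hAB
  obtain ⟨_, ⟨_, ⟨t, ht, rfl⟩, rfl⟩, hcard⟩ := hO.exists_hasOrbitOfCardLE hOfin hmem
    hABC.fst_notMem_center hABC.snd_notMem_center hAB hAC hBC
  exact ⟨t, ht, hcard⟩

/-! ### Counting -/

lemma injective_braidToPSL_expSumHom {n : ℕ} : Function.Injective
    fun t : Fin n → BraidGroup 3 => (braidToPSL ∘ t, expSumHom ∘ t) := by
  intro t u h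
  rw [Prod.mk.injEq] at h
  exact funext fun k => eq_of_braidToPSL_of_expSumHom (congrFun h.1 k) (congrFun h.2 k)

lemma encard_range_comp_perm_le {α : Type*} {n : ℕ} (f : Fin n → α) :
    (Set.range fun π : Equiv.Perm (Fin n) => f ∘ π).encard ≤ n.factorial := by
  rw [← Set.image_univ]
  refine (Set.encard_image_le _ _).trans_eq ?_
  rw [Set.encard_univ, ENat.card_eq_coe_fintype_card, Fintype.card_perm, Fintype.card_fin]

lemma encard_hurwitzOrbit_le {s t : Fin 3 → BraidGroup 3} {n : ℕ∞}
    (hfin : (hurwitzOrbit s).Finite) (ht : t ∈ hurwitzOrbit s)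
    (h : HasOrbitOfCardLE n (toTriple (braidToPSL ∘ t))) :
    (hurwitzOrbit s).encard ≤ n * Nat.factorial 3 := by
  obtain ⟨O, hO, htO, hcard⟩ := h
  have hmem := toTriple_mem_of_mem_hurwitzOrbit hfin braidToPSL hO ht htO
  have hinj := (toTriple_injective.prodMap Function.injective_id).comp
    (injective_braidToPSL_expSumHom (n := 3))
  calc (hurwitzOrbit s).encard
      ≤ (O ×ˢ Set.range fun π : Equiv.Perm (Fin 3) => (expSumHom ∘ s) ∘ π).encard := by
        refine Set.encard_le_encard_of_injOn (fun u hu => ⟨hmem u hu, ?_⟩) hinj.injOn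
        obtain ⟨π, hπ⟩ := exists_perm_of_mem_hurwitzOrbit expSumHom hfin u hu
        exact ⟨π, hπ.symm⟩
    _ = O.encard * (Set.range fun π : Equiv.Perm (Fin 3) => (expSumHom ∘ s) ∘ π).encard :=
        Set.encard_prod
    _ ≤ n * Nat.factorial 3 := mul_le_mul' hcard (encard_range_comp_perm_le _)

end BraidSystem

/-- An irreducible degree `3`, length `3` braid system with finite
Hurwitz orbit has orbit of size at most `162`. -/
theorem hurwitzOrbit_card_le_162 (s : Fin 3 → BraidGroup 3)
    (hirr : ¬ IsReducible s)
    (hfin : (hurwitzOrbit s).Finite) :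
    (hurwitzOrbit s).ncard ≤ 162 := by
  obtain ⟨t, ht, hcard⟩ := BraidSystem.exists_mem_hurwitzOrbit_hasOrbitOfCardLE hirr hfin
  have hle := BraidSystem.encard_hurwitzOrbit_le hfin ht hcard
  rw [← hfin.cast_ncard_eq] at hle
  exact_mod_cast hle
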